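/- arXiv:2403.03033 — 2 statements merged into one kernel-verified Lean document; each statement's English description precedes it below -/
import Mathlib

section
/- Let d ≥ 1, ℓ ∈ ℝ, let v₁,…,v_n ∈ ℤ^d be distinct and set D := ⋃_{i=1}^n B_{v_i}, equipped with the stratification consisting of all open faces of the cubes B_{v_1},…,B_{v_n}, and let g, p : ℝ^d → ℝ be C² functions. Assume that {g ≥ ℓ} ∩ D and {g + p ≥ ℓ} ∩ D each have at most finitely many connected components, and that none of v₁,…,v_n belongs to the finite-range unstable set U_FR(g,p) at level ℓ. Then there exists a stratified isotopy H of D such that: (1) H({g ≥ ℓ} ∩ D, t) = {g + tp ≥ ℓ} ∩ D for every t ∈ [0,1]; (2) H(·,0) is the identity map on D; (3) H({g ≥ ℓ}_∞ ∩ D, 1) = {g + p ≥ ℓ}_∞ ∩ D. -/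
open MeasureTheory Filter Set Topology Metric
open scoped ENNReal NNReal

noncomputable section

/-- `ℝ^d` as Euclidean space. -/
abbrev Euc (d : ℕ) := EuclideanSpace ℝ (Fin d)

/-- The closed unit cube `B_v = v + [0,1]^d`. -/
def unitCube (d : ℕ) (v : Fin d → ℤ) : Set (Euc d) :=
  {x | ∀ i, (v i : ℝ) ≤ x i ∧ x i ≤ (v i : ℝ) + 1}

/-- The open face of the cube `B_v` described by `s`: `some false ↦ {v i}`,
`some true ↦ {v i + 1}`, `none ↦ (v i, v i + 1)`. -/
def openFace (d : ℕ) (v : Fin d → ℤ) (s : Fin d → Option Bool) : Set (Euc d) :=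
  {x | ∀ i, match s i with
    | some false => x i = (v i : ℝ)
    | some true => x i = (v i : ℝ) + 1
    | none => (v i : ℝ) < x i ∧ x i < (v i : ℝ) + 1}

/-- `x` is a stratified critical point of `h` in the cube `B_v` at level `ℓ`. -/
def IsStratCrit (d : ℕ) (h : Euc d → ℝ) (v : Fin d → ℤ) (ℓ : ℝ) (x : Euc d) : Prop :=
  ∃ s : Fin d → Option Bool, x ∈ openFace d v s ∧ h x = ℓ ∧
    ∀ i, s i = none → fderiv ℝ h x (EuclideanSpace.single i 1) = 0

/-- `(g,p)` is locally topologically stable on `B_v` at level `ℓ`. -/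
def LocStable (d : ℕ) (g p : Euc d → ℝ) (v : Fin d → ℤ) (ℓ : ℝ) : Prop :=
  ∀ t ∈ Set.Icc (0:ℝ) 1, ∀ x : Euc d, ¬ IsStratCrit d (fun y => g y + t * p y) v ℓ x

/-- Union of the unbounded connected components of `A`. -/
def unboundedPart (d : ℕ) (A : Set (Euc d)) : Set (Euc d) :=
  {x | x ∈ A ∧ ¬ Bornology.IsBounded (connectedComponentIn A x)}

/-- Union of the bounded connected components of `A`. -/
def boundedPart (d : ℕ) (A : Set (Euc d)) : Set (Euc d) :=
  A \ unboundedPart d A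

/-- The locally unstable set `U_Loc(g,p)` at level `ℓ`. -/
def ULoc (d : ℕ) (g p : Euc d → ℝ) (ℓ : ℝ) : Set (Fin d → ℤ) :=
  {w | ¬ LocStable d g p w ℓ}

/-- The finite-range unstable set `U_FR(g,p)` at level `ℓ`. -/
def UFR (d : ℕ) (g p : Euc d → ℝ) (ℓ : ℝ) : Set (Fin d → ℤ) :=
  ULoc d g p ℓ ∪
    {w | ∃ u ∈ ULoc d g p ℓ,
      (∃ x ∈ unitCube d w, ∃ y ∈ unitCube d u,
        JoinedIn (boundedPart d {z | ℓ ≤ g z}) x y) ∨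
      (∃ x ∈ unitCube d w, ∃ y ∈ unitCube d u,
        JoinedIn (boundedPart d {z | ℓ ≤ g z + p z}) x y)}

/-- `A` has at most finitely many connected components. -/
def FinitelyManyComponents (d : ℕ) (A : Set (Euc d)) : Prop :=
  {C : Set (Euc d) | ∃ x ∈ A, C = connectedComponentIn A x}.Finite

/-- `H` is a stratified isotopy of the union `D` of the cubes `B_{v i}`:
it is continuous on `D × [0,1]`, each time slice is a homeomorphism of `D`
onto itself, and each stratum (open face) is preserved at every time. -/
def IsStratIsotopy (d n : ℕ) (v : Fin n → Fin d → ℤ) (H : Euc d → ℝ → Euc d) : Prop :=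
  ContinuousOn (fun q : Euc d × ℝ => H q.1 q.2) ((⋃ i, unitCube d (v i)) ×ˢ Set.Icc 0 1) ∧
  (∀ t ∈ Set.Icc (0:ℝ) 1,
    ∃ e : (⋃ i, unitCube d (v i)) ≃ₜ (⋃ i, unitCube d (v i)),
      ∀ x : (⋃ i, unitCube d (v i)), (e x : Euc d) = H x t) ∧
  (∀ t ∈ Set.Icc (0:ℝ) 1, ∀ i : Fin n, ∀ s : Fin d → Option Bool,
    (fun x => H x t) '' openFace d (v i) s = openFace d (v i) s)

/-- The cube `Λ_r = [-r,r]^d`. -/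
def bigCube (d : ℕ) (r : ℝ) : Set (Euc d) :=
  {x | ∀ i, |x i| ≤ r}

/-!
Write `F (t, x) = g x + t * p x`. Let `Q = ∑ᵢ sin² (π xᵢ) (∂ᵢF)² + (F - ℓ)²`; it vanishes exactly at
the stratified critical points at level `ℓ`, so it has no zero on a stable cube. The vector field
`V = -(∂ₜF / Q) ∑ᵢ sin² (π xᵢ) ∂ᵢF eᵢ`, cut off to have compact support, is tangent to every
integer coordinate hyperplane, so its flow preserves every face of every cube. Along a trajectory
in stable cubes, `F - ℓ` solves a linear equation `y' = m y`, hence keeps its sign.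

To also match the unbounded components, the flow has to be sign preserving around every bounded
component that meets `D`. Near a stable cube a superlevel set is locally path connected, so such a
bounded component is path connected and meets only stable cubes; by compactness of `D`, only
finitely many cubes are involved, and the cut-off can be placed outside all of them. The time-one
map then sends the bounded components that meet `D` to bounded components, and so does its inverse.
-/

section Gronwall

variable {E : Type*} [NormedAddCommGroup E] [NormedSpace ℝ E] {a b s t K : ℝ}

theorem eq_zero_right_of_norm_deriv_le {f f' : ℝ → E}
    (hf : ∀ r ∈ Icc a b, HasDerivWithinAt f (f' r) (Icc a b) r)
    (hK : ∀ r ∈ Icc a b, ‖f' r‖ ≤ K * ‖f r‖)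
    (hs : s ∈ Icc a b) (ht : t ∈ Icc a b) (hst : s ≤ t) (h0 : f s = 0) : f t = 0 := by
  have hsub : Icc s t ⊆ Icc a b := Icc_subset_Icc hs.1 ht.2
  have hsub' : Ico s t ⊆ Icc a b := Ico_subset_Icc_self.trans hsub
  refine eq_zero_of_abs_deriv_le_mul_abs_self_of_eq_zero_right (f' := f') (K := K)
    (fun r hr => (hf r (hsub hr)).continuousWithinAt.mono hsub) (fun r hr => ?_) h0
    (fun r hr => hK r (hsub' hr)) t ⟨hst, le_rfl⟩
  refine (hf r (hsub' hr)).mono_of_mem_nhdsWithin ?_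
  filter_upwards [self_mem_nhdsWithin, mem_nhdsWithin_of_mem_nhds (Iio_mem_nhds hr.2)]
    with x hx hx' using hsub ⟨hr.1.trans hx, hx'.le⟩

theorem eq_zero_of_norm_deriv_le {f f' : ℝ → E}
    (hf : ∀ r ∈ Icc a b, HasDerivWithinAt f (f' r) (Icc a b) r)
    (hK : ∀ r ∈ Icc a b, ‖f' r‖ ≤ K * ‖f r‖)
    (hs : s ∈ Icc a b) (ht : t ∈ Icc a b) (h0 : f s = 0) : f t = 0 := by
  rcases le_total s t with hst | hts
  · exact eq_zero_right_of_norm_deriv_le hf hK hs ht hst h0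
  · have hneg : MapsTo Neg.neg (Icc (-b) (-a)) (Icc a b) := fun r hr =>
      ⟨le_neg_of_le_neg hr.2, neg_le_of_neg_le hr.1⟩
    have hneg' : ∀ r ∈ Icc a b, -r ∈ Icc (-b) (-a) := fun r hr =>
      ⟨neg_le_neg hr.2, neg_le_neg hr.1⟩
    have hderiv : ∀ r ∈ Icc (-b) (-a),
        HasDerivWithinAt (fun r => f (-r)) (-f' (-r)) (Icc (-b) (-a)) r := fun r hr => by
      simpa only [Function.comp_def, neg_one_smul] using
        (hf (-r) (hneg hr)).scomp r (hasDerivAt_neg r).hasDerivWithinAt hneg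
    have hzero := eq_zero_right_of_norm_deriv_le hderiv
      (fun r hr => (norm_neg _).trans_le (hK (-r) (hneg hr)))
      (hneg' s hs) (hneg' t ht) (neg_le_neg hts) (by rwa [neg_neg])
    rwa [neg_neg] at hzero

theorem nonneg_iff_of_abs_deriv_le {f f' : ℝ → ℝ}
    (hf : ∀ r ∈ Icc a b, HasDerivWithinAt f (f' r) (Icc a b) r)
    (hK : ∀ r ∈ Icc a b, |f' r| ≤ K * |f r|)
    (hs : s ∈ Icc a b) (ht : t ∈ Icc a b) : 0 ≤ f s ↔ 0 ≤ f t := by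
  have hc : ContinuousOn f (Icc a b) := fun r hr => (hf r hr).continuousWithinAt
  have nonneg_of_nonneg : ∀ s ∈ Icc a b, ∀ t ∈ Icc a b, 0 ≤ f s → 0 ≤ f t := by
    intro s hs t ht h
    by_contra! hneg
    obtain ⟨r, hr, hr0⟩ := isPreconnected_Icc.intermediate_value ht hs hc ⟨hneg.le, h⟩
    exact hneg.ne (eq_zero_of_norm_deriv_le hf hK hr ht hr0)
  exact ⟨nonneg_of_nonneg s hs t ht, nonneg_of_nonneg t ht s hs⟩

theorem nonneg_iff_of_deriv_eq_mul {f m : ℝ → ℝ} (hm : ContinuousOn m (Icc a b))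
    (hf : ∀ r ∈ Icc a b, HasDerivWithinAt f (m r * f r) (Icc a b) r)
    (hs : s ∈ Icc a b) (ht : t ∈ Icc a b) : 0 ≤ f s ↔ 0 ≤ f t := by
  obtain ⟨K, hK⟩ := isCompact_Icc.exists_bound_of_continuousOn hm
  exact nonneg_iff_of_abs_deriv_le hf (fun r hr => (abs_mul _ _).trans_le
    (mul_le_mul_of_nonneg_right (hK r hr) (abs_nonneg _))) hs ht

end Gronwall

section Flow

theorem isPicardLindelof_of_lipschitzWith_of_norm_le {E : Type*} [NormedAddCommGroup E]
    {V : ℝ → E → E} {a b : ℝ} {K L : ℝ≥0} (hV : ∀ t ∈ Icc a b, LipschitzWith K (V t))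
    (hVt : ∀ x, ContinuousOn (V · x) (Icc a b)) (hL : ∀ t ∈ Icc a b, ∀ x, ‖V t x‖ ≤ L)
    (t₀ : Icc a b) (x₀ : E) :
    IsPicardLindelof V t₀ x₀ (1 + L * (b - a).toNNReal) 1 L K where
  lipschitzOnWith t ht := (hV t ht).lipschitzOnWith
  continuousOn x _ := hVt x
  norm_le t ht x _ := hL t ht x
  mul_max_le := by
    have hmax : max (b - t₀) (t₀ - a) ≤ b - a :=
      max_le (sub_le_sub_left t₀.2.1 b) (sub_le_sub_right t₀.2.2 a)
    rw [NNReal.coe_add, NNReal.coe_mul, NNReal.coe_one, add_sub_cancel_left]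
    exact mul_le_mul_of_nonneg_left (hmax.trans (Real.le_coe_toNNReal _)) L.2

variable {E : Type*} [NormedAddCommGroup E] [NormedSpace ℝ E] {V : ℝ → E → E} {a b s t : ℝ}
  {K L : ℝ≥0} {γ δ : ℝ → E}

theorem isIntegralCurveOn_Icc_unique (hV : ∀ t ∈ Icc a b, LipschitzWith K (V t))
    (hγ : IsIntegralCurveOn γ V (Icc a b)) (hδ : IsIntegralCurveOn δ V (Icc a b))
    (hs : s ∈ Icc a b) (ht : t ∈ Icc a b) (h : γ s = δ s) : γ t = δ t :=
  sub_eq_zero.1 <| eq_zero_of_norm_deriv_le (f := fun r => γ r - δ r) (K := K)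
    (fun r hr => (hγ r hr).sub (hδ r hr)) (fun r hr => (hV r hr).norm_sub_le _ _) hs ht
    (sub_eq_zero.2 h)

/- Projecting `y` to the hyperplane `{f = c}` shows `|f (V r y)| ≤ C |f y - c|`. -/
theorem le_apply_iff_of_tangent (hV : ∀ t ∈ Icc a b, LipschitzWith K (V t)) (f : E →L[ℝ] ℝ)
    {c : ℝ} (htangent : ∀ t ∈ Icc a b, ∀ y, f y = c → f (V t y) = 0)
    (hγ : IsIntegralCurveOn γ V (Icc a b)) (hs : s ∈ Icc a b) (ht : t ∈ Icc a b) :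
    c ≤ f (γ s) ↔ c ≤ f (γ t) := by
  obtain rfl | ⟨u, hu⟩ : f = 0 ∨ ∃ u, f u = 1 := by
    refine or_iff_not_imp_left.2 fun hf => ?_
    obtain ⟨u, hu⟩ := DFunLike.ne_iff.1 hf
    exact ⟨(f u)⁻¹ • u, by simpa using inv_mul_cancel₀ hu⟩
  · rfl
  have hbound : ∀ r ∈ Icc a b, ∀ y, |f (V r y)| ≤ ‖f‖ * K * ‖u‖ * |f y - c| := by
    intro r hr y
    set y' := y - (f y - c) • u with hy'
    have hy'c : f (V r y') = 0 := htangent r hr y' (by simp [hy', hu])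
    calc |f (V r y)| = ‖f (V r y - V r y')‖ := by rw [map_sub, hy'c, sub_zero, Real.norm_eq_abs]
      _ ≤ ‖f‖ * (K * ‖y - y'‖) :=
        (f.le_opNorm _).trans (by gcongr; exact (hV r hr).norm_sub_le _ _)
      _ = ‖f‖ * K * ‖u‖ * |f y - c| := by
        rw [hy', sub_sub_cancel, norm_smul, Real.norm_eq_abs]; ring
  simpa only [sub_nonneg] using nonneg_iff_of_abs_deriv_le (f := fun r => f (γ r) - c)
    (fun r hr => (f.hasFDerivAt.comp_hasDerivWithinAt r (hγ r hr)).sub_const c)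
    (fun r hr => hbound r hr (γ r)) hs ht

/-- `φ t` is the time-`t` map of the flow of the time-dependent vector field `V` on `[a, b]`,
started at time `a`. -/
structure IsFlowOn (V : ℝ → E → E) (a b : ℝ) (φ : ℝ → E ≃ₜ E) : Prop where
  apply_left : ∀ x, φ a x = x
  isIntegralCurveOn : ∀ x, IsIntegralCurveOn (fun t => φ t x) V (Icc a b)
  continuousOn : ContinuousOn (fun q : E × ℝ => φ q.2 q.1) (univ ×ˢ Icc a b)

theorem continuousOn_of_isIntegralCurveOn [CompleteSpace E]
    (hV : ∀ t ∈ Icc a b, LipschitzWith K (V t)) (hVt : ∀ x, ContinuousOn (V · x) (Icc a b))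
    (hL : ∀ t ∈ Icc a b, ∀ x, ‖V t x‖ ≤ L) (hs : s ∈ Icc a b) {σ : E → ℝ → E}
    (hσs : ∀ x, σ x s = x) (hσ : ∀ x, IsIntegralCurveOn (σ x) V (Icc a b)) :
    ContinuousOn (fun q : E × ℝ => σ q.1 q.2) (univ ×ˢ Icc a b) := by
  rintro ⟨x, t⟩ ⟨-, ht⟩
  obtain ⟨α, hα, hαc⟩ := (isPicardLindelof_of_lipschitzWith_of_norm_le hV hVt hL ⟨s, hs⟩
    x).exists_forall_mem_closedBall_eq_hasDerivWithinAt_continuousOn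
  have heq : EqOn (fun q : E × ℝ => σ q.1 q.2) α (closedBall x ((1 : ℝ≥0) : ℝ) ×ˢ Icc a b) :=
    fun ⟨y, r⟩ ⟨hy, hr⟩ => isIntegralCurveOn_Icc_unique (δ := fun r => α (y, r)) hV (hσ y)
      (hα y hy).2 hs hr ((hσs y).trans (hα y hy).1.symm)
  refine (hαc.congr heq _ ⟨mem_closedBall_self zero_le_one, ht⟩).mono_of_mem_nhdsWithin ?_
  rw [nhdsWithin_prod_eq]
  exact prod_mem_prod (mem_nhdsWithin_of_mem_nhds (closedBall_mem_nhds x zero_lt_one))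
    self_mem_nhdsWithin

theorem exists_isFlowOn [CompleteSpace E] (hab : a ≤ b)
    (hV : ∀ t ∈ Icc a b, LipschitzWith K (V t)) (hVt : ∀ x, ContinuousOn (V · x) (Icc a b))
    (hL : ∀ t ∈ Icc a b, ∀ x, ‖V t x‖ ≤ L) : ∃ φ : ℝ → E ≃ₜ E, IsFlowOn V a b φ := by
  have hcurve : ∀ (s : Icc a b) (x : E), ∃ γ : ℝ → E, γ s = x ∧ IsIntegralCurveOn γ V (Icc a b) :=
    fun s x => (isPicardLindelof_of_lipschitzWith_of_norm_le hV hVt hL s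
      x).exists_eq_forall_mem_Icc_hasDerivWithinAt (mem_closedBall_self zero_le_one)
  choose σ hσs hσ using hcurve
  have hcont (s : Icc a b) : ContinuousOn (fun q : E × ℝ => σ s q.1 q.2) (univ ×ˢ Icc a b) :=
    continuousOn_of_isIntegralCurveOn hV hVt hL s.2 (hσs s) (hσ s)
  have hslice (s t : Icc a b) : Continuous fun x => σ s x t :=
    continuousOn_univ.1 <| (hcont s).comp (f := fun x : E => (x, (t : ℝ))) (by fun_prop)
      fun x _ => ⟨mem_univ x, t.2⟩
  have hinv (s t : Icc a b) (x : E) : σ t (σ s x t) s = x :=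
    (isIntegralCurveOn_Icc_unique hV (hσ t _) (hσ s x) t.2 s.2 (hσs t _)).trans (hσs s x)
  let start : Icc a b := ⟨a, left_mem_Icc.2 hab⟩
  let clamp (t : ℝ) : Icc a b := projIcc a b hab t
  let φ (t : ℝ) : E ≃ₜ E :=
    { toFun := fun x => σ start x (clamp t)
      invFun := fun x => σ (clamp t) x start
      left_inv := hinv start (clamp t)
      right_inv := hinv (clamp t) start
      continuous_toFun := hslice start (clamp t)
      continuous_invFun := hslice (clamp t) start }
  have hφ : ∀ x, ∀ t ∈ Icc a b, φ t x = σ start x t := fun x t ht =>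
    congrArg (σ start x) (congrArg Subtype.val (projIcc_of_mem hab ht))
  refine ⟨φ, fun x => (hφ x a start.2).trans (hσs start x), fun x t ht => ?_,
    (hcont start).congr fun q hq => hφ q.1 q.2 hq.2⟩
  refine HasDerivWithinAt.congr ?_ (fun r hr => hφ x r hr) (hφ x t ht)
  simpa only [hφ x t ht] using hσ start x t ht

end Flow

section Lattice

variable {d : ℕ} {w : Fin d → ℤ} {x : Euc d}

theorem isCompact_unitCube (w : Fin d → ℤ) : IsCompact (unitCube d w) := by
  have hpreimage : unitCube d w = (EuclideanSpace.equiv (Fin d) ℝ).toHomeomorph ⁻¹'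
      Icc (fun i => (w i : ℝ)) (fun i => (w i : ℝ) + 1) := by
    ext x
    simp [unitCube, Pi.le_def, forall_and]
  rw [hpreimage]
  exact (EuclideanSpace.equiv (Fin d) ℝ).toHomeomorph.isCompact_preimage.2 isCompact_Icc

theorem exists_mem_unitCube (x : Euc d) : ∃ w, x ∈ unitCube d w :=
  ⟨fun i => ⌊x i⌋, fun _ => ⟨Int.floor_le _, (Int.lt_floor_add_one _).le⟩⟩

theorem exists_mem_openFace (hx : x ∈ unitCube d w) : ∃ s, x ∈ openFace d w s := by
  have hcoord : ∀ i, ∃ b : Option Bool, match b with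
      | some false => x i = (w i : ℝ)
      | some true => x i = (w i : ℝ) + 1
      | none => (w i : ℝ) < x i ∧ x i < (w i : ℝ) + 1 := fun i => by
    rcases (hx i).1.eq_or_lt with hleft | hleft
    · exact ⟨some false, hleft.symm⟩
    rcases (hx i).2.eq_or_lt with hright | hright
    · exact ⟨some true, hright⟩
    · exact ⟨none, hleft, hright⟩
  choose s hs using hcoord
  exact ⟨s, hs⟩

/-- The base points of the lattice cubes that meet `S`. -/
def cubesMeeting (d : ℕ) (S : Set (Euc d)) : Set (Fin d → ℤ) :=
  {w | (unitCube d w ∩ S).Nonempty}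

theorem cubesMeeting_mono {S T : Set (Euc d)} (h : S ⊆ T) : cubesMeeting d S ⊆ cubesMeeting d T :=
  fun _ hw => hw.mono (inter_subset_inter_right _ h)

theorem finite_cubesMeeting {S : Set (Euc d)} (hS : Bornology.IsBounded S) :
    (cubesMeeting d S).Finite := by
  obtain ⟨R, hR⟩ := hS.subset_closedBall (0 : Euc d)
  refine (finite_Icc (fun _ : Fin d => ⌊-R - 1⌋) (fun _ => ⌈R⌉)).subset ?_
  rintro w ⟨y, hyw, hy⟩
  have hcoord : ∀ i, |y i| ≤ R := fun i =>
    (PiLp.norm_apply_le y i).trans (by simpa using hR hy)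
  refine ⟨fun i => Int.floor_le_iff.2 ?_, fun i => Int.le_ceil_iff.2 ?_⟩
  · linarith [(abs_le.1 (hcoord i)).1, (hyw i).2]
  · linarith [(abs_le.1 (hcoord i)).2, (hyw i).1]

theorem locallyFinite_unitCube : LocallyFinite (unitCube d) := fun x =>
  ⟨ball x 1, ball_mem_nhds x one_pos, finite_cubesMeeting isBounded_ball⟩

theorem biUnion_unitCube_mem_nhds (x : Euc d) :
    (⋃ w ∈ cubesMeeting d {x}, unitCube d w) ∈ 𝓝 x := by
  filter_upwards [locallyFinite_unitCube.iInter_compl_mem_nhds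
    (fun w => (isCompact_unitCube w).isClosed) x] with y hy
  obtain ⟨w, hw⟩ := exists_mem_unitCube y
  refine mem_iUnion₂.2 ⟨w, inter_singleton_nonempty.2 ?_, hw⟩
  by_contra hxw
  exact mem_iInter₂.1 hy w hxw hw

/-- A self-map of `ℝ^d` preserves the lattice if it maps every closed half-space bounded by an
integer coordinate hyperplane into itself and its complement into its complement; equivalently, it
preserves every open face of every lattice cube. -/
def PreservesLattice (e : Euc d → Euc d) : Prop :=
  ∀ x i (k : ℤ), ((k : ℝ) ≤ e x i ↔ (k : ℝ) ≤ x i) ∧ (e x i ≤ k ↔ x i ≤ k)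

namespace PreservesLattice

variable {e : Euc d → Euc d}

theorem mem_unitCube_iff (he : PreservesLattice e) : e x ∈ unitCube d w ↔ x ∈ unitCube d w :=
  forall_congr' fun i => and_congr (he x i (w i)).1 (by simpa using (he x i (w i + 1)).2)

theorem mem_openFace_iff (he : PreservesLattice e) {s : Fin d → Option Bool} :
    e x ∈ openFace d w s ↔ x ∈ openFace d w s := by
  refine forall_congr' fun i => ?_
  have hleft := he x i (w i)
  have hright := he x i (w i + 1)
  push_cast at hright
  rcases s i with _ | _ | _
  · simpa only [not_le] using and_congr hleft.2.not hright.1.not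
  · simp only [le_antisymm_iff, hleft]
  · simp only [le_antisymm_iff, hright]

theorem symm {e : Euc d ≃ₜ Euc d} (he : PreservesLattice e) : PreservesLattice e.symm :=
  fun x i k => by simpa [iff_comm] using he (e.symm x) i k

end PreservesLattice

/-- A continuous family of self-homeomorphisms of `ℝ^d` that starts at the identity and preserves
the lattice at all times in `[0, 1]`. It restricts to a stratified isotopy of every union of lattice
cubes. -/
structure IsLatticeIsotopy (φ : ℝ → Euc d ≃ₜ Euc d) : Prop where
  apply_zero : ∀ x, φ 0 x = x
  continuousOn : ContinuousOn (fun q : Euc d × ℝ => φ q.2 q.1) (univ ×ˢ Icc 0 1)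
  preservesLattice : ∀ t ∈ Icc (0 : ℝ) 1, PreservesLattice (φ t)

namespace IsLatticeIsotopy

variable {φ : ℝ → Euc d ≃ₜ Euc d} {t : ℝ}

theorem mem_iUnion_unitCube_iff {ι : Type*} {v : ι → Fin d → ℤ} (hφ : IsLatticeIsotopy φ)
    (ht : t ∈ Icc (0 : ℝ) 1) :
    φ t x ∈ ⋃ i, unitCube d (v i) ↔ x ∈ ⋃ i, unitCube d (v i) := by
  simp only [mem_iUnion, (hφ.preservesLattice t ht).mem_unitCube_iff]

theorem isStratIsotopy {n : ℕ} {v : Fin n → Fin d → ℤ} (hφ : IsLatticeIsotopy φ) :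
    IsStratIsotopy d n v fun x t => φ t x := by
  refine ⟨hφ.continuousOn.mono (prod_mono_left (subset_univ _)), fun t ht => ?_, fun t ht i s => ?_⟩
  · exact ⟨(φ t).subtype fun x => (hφ.mem_iUnion_unitCube_iff ht).symm, fun x => rfl⟩
  · exact ((φ t).toEquiv.bijOn fun x => (hφ.preservesLattice t ht).mem_openFace_iff).image_eq

theorem image_inter_iUnion_unitCube {ι : Type*} {v : ι → Fin d → ℤ} (hφ : IsLatticeIsotopy φ)
    (ht : t ∈ Icc (0 : ℝ) 1) {A B : Set (Euc d)}
    (hAB : ∀ x ∈ ⋃ i, unitCube d (v i), (φ t x ∈ B ↔ x ∈ A)) :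
    φ t '' (A ∩ ⋃ i, unitCube d (v i)) = B ∩ ⋃ i, unitCube d (v i) :=
  ((φ t).toEquiv.bijOn fun x => by
    simpa only [mem_inter_iff, Homeomorph.coe_toEquiv, hφ.mem_iUnion_unitCube_iff ht]
      using and_congr_left (hAB x)).image_eq

end IsLatticeIsotopy

end Lattice

theorem exists_contDiff_hasCompactSupport_eqOn_inv {E : Type*} [NormedAddCommGroup E]
    [NormedSpace ℝ E] [FiniteDimensional ℝ E] {n : ℕ} {f : E → ℝ} (hf : ContDiff ℝ n f)
    {K : Set E} (hK : IsCompact K) (hfK : ∀ x ∈ K, f x ≠ 0) :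
    ∃ ρ : E → ℝ, ContDiff ℝ n ρ ∧ HasCompactSupport ρ ∧ EqOn ρ f⁻¹ K := by
  obtain ⟨η, hη, hηn, hη01⟩ :=
    hK.isClosed.isOpen_compl.exists_contDiff_support_eq (n := (n : ℕ∞))
  obtain ⟨R, hR⟩ := hK.isBounded.subset_closedBall (0 : E)
  let χ : ContDiffBump (0 : E) :=
    ⟨max R 1, max R 1 + 1, lt_max_of_lt_right one_pos, lt_add_one _⟩
  have hη0 : ∀ x, 0 ≤ η x := fun x => (hη01 (mem_range_self x)).1
  have hηK : ∀ x, η x ≠ 0 ↔ x ∉ K := fun x => by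
    rw [← Function.mem_support, hη, mem_compl_iff]
  have hdenom : ∀ x, f x ^ 2 + η x ≠ 0 := fun x h => by
    have hzero := (add_eq_zero_iff_of_nonneg (sq_nonneg (f x)) (hη0 x)).1 h
    exact hfK x (not_not.1 fun hxK => (hηK x).2 hxK hzero.2)
      (pow_eq_zero_iff two_ne_zero |>.1 hzero.1)
  refine ⟨fun x => χ x * (f x / (f x ^ 2 + η x)),
    χ.contDiff.mul (hf.div ((hf.pow 2).add hηn) hdenom), χ.hasCompactSupport.mul_right,
    fun x hx => ?_⟩
  have hχx : χ x = 1 := χ.one_of_mem_closedBall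
    (closedBall_subset_closedBall (le_max_left _ _) (hR hx))
  have hηx : η x = 0 := not_not.1 fun h => (hηK x).1 h hx
  have hfx := hfK x hx
  simp only [hχx, hηx, add_zero, one_mul, Pi.inv_apply]
  field_simp

section OneParameterFamily

/-- The weight `sin² (π s)`, vanishing exactly at the integers; it slows a vector field down near
the lattice hyperplanes. -/
def latticeWeight (s : ℝ) : ℝ := Real.sin (Real.pi * s) ^ 2

theorem latticeWeight_nonneg (s : ℝ) : 0 ≤ latticeWeight s := sq_nonneg _

theorem latticeWeight_eq_zero_iff {s : ℝ} : latticeWeight s = 0 ↔ ∃ k : ℤ, s = k := by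
  rw [latticeWeight, pow_eq_zero_iff two_ne_zero, Real.sin_eq_zero_iff]
  refine exists_congr fun k => ?_
  rw [mul_comm, mul_right_inj' Real.pi_ne_zero, eq_comm]

theorem contDiff_latticeWeight {n : WithTop ℕ∞} : ContDiff ℝ n latticeWeight :=
  (Real.contDiff_sin.comp (contDiff_const.mul contDiff_id)).pow 2

variable {d : ℕ}

/-- The base points of the lattice cubes in which `f` has no stratified critical point at
level `ℓ`. -/
def regularCubes (f : Euc d → ℝ) (ℓ : ℝ) : Set (Fin d → ℤ) :=
  {w | ∀ x, ¬ IsStratCrit d f w ℓ x}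

/-- The defect `∑ᵢ sin² (π xᵢ) (∂ᵢF)² + (F - ℓ)²` at `(t, x)` of the family `F (t, ·)`, which
vanishes exactly at the stratified critical points of `F (t, ·)` at level `ℓ`. -/
def critDefect (F : ℝ × Euc d → ℝ) (ℓ : ℝ) (z : ℝ × Euc d) : ℝ :=
  ∑ i, latticeWeight (z.2 i) * fderiv ℝ F z (0, EuclideanSpace.single i 1) ^ 2 + (F z - ℓ) ^ 2

/-- The spatial vector field `-ρ ∂ₜF ∑ᵢ sin² (π xᵢ) ∂ᵢF eᵢ`. Where `ρ` is the reciprocal of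
`critDefect F ℓ`, its flow keeps the sign of `F - ℓ`. -/
def liftField (F ρ : ℝ × Euc d → ℝ) (z : ℝ × Euc d) : Euc d :=
  WithLp.toLp 2 fun i => -(ρ z * fderiv ℝ F z (1, 0) *
    (latticeWeight (z.2 i) * fderiv ℝ F z (0, EuclideanSpace.single i 1)))

variable {F ρ : ℝ × Euc d → ℝ} {ℓ : ℝ}

theorem contDiff_latticeWeight_snd_apply {n : WithTop ℕ∞} (i : Fin d) :
    ContDiff ℝ n fun z : ℝ × Euc d => latticeWeight (z.2 i) :=
  contDiff_latticeWeight.comp (contDiff_euclidean.1 contDiff_snd i)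

theorem contDiff_fderiv_apply (hF : ContDiff ℝ 2 F) (u : ℝ × Euc d) :
    ContDiff ℝ 1 fun z => fderiv ℝ F z u :=
  (hF.fderiv_right (m := 1) one_add_one_eq_two.le).clm_apply contDiff_const

theorem contDiff_critDefect (hF : ContDiff ℝ 2 F) (ℓ : ℝ) : ContDiff ℝ 1 (critDefect F ℓ) :=
  (ContDiff.sum fun i _ => (contDiff_latticeWeight_snd_apply i).mul
    ((contDiff_fderiv_apply hF _).pow 2)).add
      (((hF.of_le one_le_two).sub contDiff_const).pow 2)

theorem contDiff_liftField (hF : ContDiff ℝ 2 F) (hρ : ContDiff ℝ 1 ρ) :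
    ContDiff ℝ 1 (liftField F ρ) := by
  rw [contDiff_euclidean]
  exact fun i => ((hρ.mul (contDiff_fderiv_apply hF _)).mul
    ((contDiff_latticeWeight_snd_apply i).mul (contDiff_fderiv_apply hF _))).neg

theorem hasCompactSupport_liftField (hρ : HasCompactSupport ρ) :
    HasCompactSupport (liftField F ρ) := by
  refine hρ.mono fun z hz hρz => hz ?_
  ext i
  simp [liftField, hρz]

theorem fderiv_slice_apply {t : ℝ} {x : Euc d} (hF : DifferentiableAt ℝ F (t, x)) (u : Euc d) :
    fderiv ℝ (fun y => F (t, y)) x u = fderiv ℝ F (t, x) (0, u) := by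
  have hslice : HasFDerivAt (fun y => F (t, y)) _ x :=
    hF.hasFDerivAt.comp x (hasFDerivAt_prodMk_right t x)
  simp [hslice.fderiv]

theorem critDefect_ne_zero {t : ℝ} {x : Euc d} {w : Fin d → ℤ}
    (hF : DifferentiableAt ℝ F (t, x)) (hw : w ∈ regularCubes (fun y => F (t, y)) ℓ)
    (hx : x ∈ unitCube d w) : critDefect F ℓ (t, x) ≠ 0 := by
  intro h
  have hterm : ∀ i ∈ Finset.univ, 0 ≤ latticeWeight (x i) *
      fderiv ℝ F (t, x) (0, EuclideanSpace.single i 1) ^ 2 := fun i _ =>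
    mul_nonneg (latticeWeight_nonneg _) (sq_nonneg _)
  obtain ⟨hgrad, hlevel⟩ :=
    (add_eq_zero_iff_of_nonneg (Finset.sum_nonneg hterm) (sq_nonneg _)).1 h
  obtain ⟨s, hs⟩ := exists_mem_openFace hx
  refine hw x ⟨s, hs, sub_eq_zero.1 (pow_eq_zero_iff two_ne_zero |>.1 hlevel), fun i hi => ?_⟩
  obtain ⟨hleft, hright⟩ : (w i : ℝ) < x i ∧ x i < w i + 1 := by simpa only [hi] using hs i
  have hweight : latticeWeight (x i) ≠ 0 := fun h0 => by
    obtain ⟨k, hk⟩ := latticeWeight_eq_zero_iff.1 h0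
    have hleft' : w i < k := Int.cast_lt.1 (hk ▸ hleft)
    have hright' : k < w i + 1 := (Int.cast_lt (R := ℝ)).1 (by simpa [hk] using hright)
    lia
  rw [fderiv_slice_apply hF]
  exact pow_eq_zero_iff two_ne_zero |>.1 <| (mul_eq_zero.1 <|
    (Finset.sum_eq_zero_iff_of_nonneg hterm).1 hgrad i (Finset.mem_univ i)).resolve_left hweight

theorem fderiv_apply_liftField (F ρ : ℝ × Euc d → ℝ) (ℓ : ℝ) (z : ℝ × Euc d) :
    fderiv ℝ F z (1, liftField F ρ z) =
      fderiv ℝ F z (1, 0) * (1 - ρ z * (critDefect F ℓ z - (F z - ℓ) ^ 2)) := by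
  have hdecomp : ((1, liftField F ρ z) : ℝ × Euc d) =
      (1, 0) + ∑ i, liftField F ρ z i • (0, EuclideanSpace.single i 1) := by
    have hsum := (EuclideanSpace.basisFun (Fin d) ℝ).sum_repr (liftField F ρ z)
    simp only [EuclideanSpace.basisFun_repr, EuclideanSpace.basisFun_apply] at hsum
    ext1
    · simp [Prod.fst_sum]
    · simp [Prod.snd_sum, hsum]
  rw [hdecomp, map_add, map_sum, critDefect, add_sub_cancel_right, mul_sub, mul_one, sub_eq_add_neg,
    Finset.mul_sum, Finset.mul_sum, ← Finset.sum_neg_distrib]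
  congr 1
  refine Finset.sum_congr rfl fun i _ => ?_
  rw [map_smul, smul_eq_mul, liftField]
  ring

theorem le_iff_of_isIntegralCurveOn_liftField (hF : ContDiff ℝ 2 F) (hρ : Continuous ρ)
    {γ : ℝ → Euc d} {a b s t : ℝ}
    (hγ : IsIntegralCurveOn γ (fun t x => liftField F ρ (t, x)) (Icc a b))
    (hρQ : ∀ r ∈ Icc a b, ρ (r, γ r) * critDefect F ℓ (r, γ r) = 1)
    (hs : s ∈ Icc a b) (ht : t ∈ Icc a b) : ℓ ≤ F (s, γ s) ↔ ℓ ≤ F (t, γ t) := by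
  have hm : Continuous fun z => fderiv ℝ F z (1, 0) * ρ z * (F z - ℓ) :=
    ((contDiff_fderiv_apply hF _).continuous.mul hρ).mul (hF.continuous.sub continuous_const)
  have hcurve : ContinuousOn (fun r => (r, γ r)) (Icc a b) :=
    continuousOn_id.prodMk hγ.continuousOn
  have hderiv : ∀ r ∈ Icc a b, HasDerivWithinAt (fun r => F (r, γ r) - ℓ)
      (fderiv ℝ F (r, γ r) (1, 0) * ρ (r, γ r) * (F (r, γ r) - ℓ) * (F (r, γ r) - ℓ))
      (Icc a b) r := fun r hr => by
    refine (((hF.differentiable two_ne_zero) (r, γ r)).hasFDerivAt.comp_hasDerivWithinAt r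
      ((hasDerivWithinAt_id r _).prodMk (hγ r hr)) |>.sub_const ℓ).congr_deriv ?_
    rw [fderiv_apply_liftField F ρ ℓ, mul_sub (ρ _), hρQ r hr]
    ring
  simpa only [sub_nonneg] using
    nonneg_iff_of_deriv_eq_mul (hm.comp_continuousOn hcurve) hderiv hs ht

theorem IsFlowOn.isLatticeIsotopy {V : ℝ → Euc d → Euc d} {φ : ℝ → Euc d ≃ₜ Euc d} {K : ℝ≥0}
    (hφ : IsFlowOn V 0 1 φ) (hV : ∀ t ∈ Icc (0 : ℝ) 1, LipschitzWith K (V t))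
    (htangent : ∀ t ∈ Icc (0 : ℝ) 1, ∀ x i (k : ℤ), x i = (k : ℝ) → V t x i = 0) :
    IsLatticeIsotopy φ where
  apply_zero := hφ.apply_left
  continuousOn := hφ.continuousOn
  preservesLattice t ht x i k := by
    have hzero : (0 : ℝ) ∈ Icc (0 : ℝ) 1 := left_mem_Icc.2 zero_le_one
    have hlower := le_apply_iff_of_tangent hV (EuclideanSpace.proj (𝕜 := ℝ) i) (c := k)
      (fun t ht y hy => htangent t ht y i k hy) (hφ.isIntegralCurveOn x) ht hzero
    have hupper := le_apply_iff_of_tangent hV (-EuclideanSpace.proj (𝕜 := ℝ) i) (c := -k)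
      (fun t ht y hy => neg_eq_zero.2 (htangent t ht y i k (neg_injective hy)))
      (hφ.isIntegralCurveOn x) ht hzero
    simp only [neg_apply, PiLp.proj_apply, neg_le_neg_iff, hφ.apply_left] at hlower hupper
    exact ⟨hlower, hupper⟩

theorem exists_isLatticeIsotopy (hF : ContDiff ℝ 2 F) {W : Set (Fin d → ℤ)} (hW : W.Finite)
    (hregular : ∀ t ∈ Icc (0 : ℝ) 1, W ⊆ regularCubes (fun x => F (t, x)) ℓ) :
    ∃ φ : ℝ → Euc d ≃ₜ Euc d, IsLatticeIsotopy φ ∧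
      ∀ t ∈ Icc (0 : ℝ) 1, ∀ x ∈ ⋃ w ∈ W, unitCube d w, (ℓ ≤ F (t, φ t x) ↔ ℓ ≤ F (0, x)) := by
  have hdefect : ∀ z ∈ Icc (0 : ℝ) 1 ×ˢ ⋃ w ∈ W, unitCube d w, critDefect F ℓ z ≠ 0 := by
    rintro ⟨t, x⟩ ⟨ht, hx⟩
    obtain ⟨w, hw, hxw⟩ := mem_iUnion₂.1 hx
    exact critDefect_ne_zero (hF.differentiable two_ne_zero _) (hregular t ht hw) hxw
  obtain ⟨ρ, hρ, hρc, hρQ⟩ := exists_contDiff_hasCompactSupport_eqOn_inv (n := 1)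
    (contDiff_critDefect hF ℓ)
    (isCompact_Icc.prod (hW.isCompact_biUnion fun w _ => isCompact_unitCube w)) hdefect
  have hV : ContDiff ℝ 1 (liftField F ρ) := contDiff_liftField hF hρ
  have hVc : HasCompactSupport (liftField F ρ) := hasCompactSupport_liftField hρc
  obtain ⟨K, hK⟩ := ContDiff.lipschitzWith_of_hasCompactSupport hVc hV one_ne_zero
  obtain ⟨L, hL⟩ := hVc.exists_bound_of_continuous hV.continuous
  have hlip : ∀ t ∈ Icc (0 : ℝ) 1, LipschitzWith K fun x => liftField F ρ (t, x) := fun t _ =>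
    LipschitzWith.of_dist_le_mul fun x y => by
      simpa [Prod.dist_eq] using hK.dist_le_mul (t, x) (t, y)
  obtain ⟨φ, hφ⟩ := exists_isFlowOn (V := fun t x => liftField F ρ (t, x)) (L := L.toNNReal)
    zero_le_one hlip
    (fun x => (hV.continuous.comp (continuous_id.prodMk continuous_const)).continuousOn)
    fun t _ x => (hL _).trans (Real.le_coe_toNNReal L)
  have hiso : IsLatticeIsotopy φ := hφ.isLatticeIsotopy hlip fun t _ x i k hk => by
    simp [liftField, latticeWeight_eq_zero_iff.2 ⟨k, hk⟩]
  refine ⟨φ, hiso, fun t ht x hx => ?_⟩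
  obtain ⟨w, hw, hxw⟩ := mem_iUnion₂.1 hx
  have hstay : ∀ r ∈ Icc (0 : ℝ) 1, (r, φ r x) ∈ Icc (0 : ℝ) 1 ×ˢ ⋃ w ∈ W, unitCube d w :=
    fun r hr => ⟨hr, mem_iUnion₂.2
      ⟨w, hw, (hiso.preservesLattice r hr).mem_unitCube_iff.2 hxw⟩⟩
  rw [le_iff_of_isIntegralCurveOn_liftField hF hρ.continuous (hφ.isIntegralCurveOn x)
    (fun r hr => ?_) ht (left_mem_Icc.2 zero_le_one), hφ.apply_left]
  rw [hρQ (hstay r hr), Pi.inv_apply, inv_mul_cancel₀ (hdefect _ (hstay r hr))]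

end OneParameterFamily

section Components

variable {X : Type*} [TopologicalSpace X] {A B s U : Set X} {x : X}

theorem subset_of_isPreconnected_of_mem_nhdsWithin (hs : IsPreconnected s)
    (hU : (s ∩ U).Nonempty) (hsU : ∀ a ∈ s ∩ closure U, U ∈ 𝓝[s] a) : s ⊆ U := by
  have hsub : s ∩ interior (U ∪ sᶜ) ⊆ U := fun a ha =>
    (interior_subset ha.2).resolve_right (not_not.2 ha.1)
  have hcover : s ⊆ interior (U ∪ sᶜ) ∪ (closure U)ᶜ := fun a ha => by
    by_cases haU : a ∈ closure U
    · refine Or.inl (mem_interior_iff_mem_nhds.2 ?_)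
      rw [union_comm]
      exact mem_nhdsWithin_iff_eventually.1 (hsU a ⟨ha, haU⟩) |>.mono fun b hb =>
        or_iff_not_imp_left.2 fun hbs => hb (not_not.1 hbs)
    · exact Or.inr haU
  have hdisjoint : s ∩ (interior (U ∪ sᶜ) ∩ (closure U)ᶜ) = ∅ :=
    eq_empty_of_forall_notMem fun a ha => ha.2.2 (subset_closure (hsub ⟨ha.1, ha.2.1⟩))
  rcases isPreconnected_iff_subset_of_disjoint.1 hs _ _ isOpen_interior
    isClosed_closure.isOpen_compl hcover hdisjoint with h | h
  · exact fun a ha => hsub ⟨ha, h ha⟩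
  · obtain ⟨a, has, haU⟩ := hU
    exact absurd (subset_closure haU) (h has)

theorem pathComponentIn_subset_connectedComponentIn (A : Set X) (x : X) :
    pathComponentIn A x ⊆ connectedComponentIn A x := fun _ hy =>
  (isPathConnected_pathComponentIn hy.source_mem).isConnected.isPreconnected
    |>.subset_connectedComponentIn (mem_pathComponentIn_self hy.source_mem)
      pathComponentIn_subset hy

theorem connectedComponentIn_eq_pathComponentIn
    (h : ∀ a ∈ A ∩ closure (pathComponentIn A x), pathComponentIn A a ∈ 𝓝[A] a) :
    connectedComponentIn A x = pathComponentIn A x := by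
  refine Subset.antisymm (fun y hy => ?_) (pathComponentIn_subset_connectedComponentIn A x)
  have hx : x ∈ A := connectedComponentIn_nonempty_iff.1 ⟨y, hy⟩
  refine subset_of_isPreconnected_of_mem_nhdsWithin isPreconnected_connectedComponentIn
    ⟨x, mem_connectedComponentIn hx, mem_pathComponentIn_self hx⟩ (fun a ha => ?_) hy
  have hsub : connectedComponentIn A x ⊆ A := connectedComponentIn_subset A x
  have hnhds := h a ⟨hsub ha.1, ha.2⟩
  obtain ⟨b, hba, hbx⟩ := (mem_closure_iff_nhdsWithin_neBot.1 ha.2).nonempty_of_mem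
    (inter_mem (nhdsWithin_mono a pathComponentIn_subset hnhds) self_mem_nhdsWithin)
  rw [← pathComponentIn_congr hbx, pathComponentIn_congr hba]
  exact nhdsWithin_mono a hsub hnhds

theorem isClosed_connectedComponentIn (hA : IsClosed A) (x : X) :
    IsClosed (connectedComponentIn A x) := by
  by_cases hx : x ∈ A
  · exact closure_subset_iff_isClosed.1 <|
      isPreconnected_connectedComponentIn.closure.subset_connectedComponentIn
        (subset_closure (mem_connectedComponentIn hx))
        (closure_minimal (connectedComponentIn_subset A x) hA)
  · rw [connectedComponentIn_eq_empty hx]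
    exact isClosed_empty

theorem connectedComponentIn_congr_of_eventuallyEq (hA : IsClosed A) (hx : x ∈ A)
    (hopen : ∀ y ∈ connectedComponentIn A x, connectedComponentIn A x ∈ 𝓝[A] y)
    (hAB : ∀ y ∈ connectedComponentIn A x, A =ᶠ[𝓝 y] B) :
    connectedComponentIn A x = connectedComponentIn B x := by
  have hxC : x ∈ connectedComponentIn A x := mem_connectedComponentIn hx
  have hB : connectedComponentIn A x ⊆ B := fun y hy =>
    (hAB y hy).mem_iff.self_of_nhds.1 (connectedComponentIn_subset A x hy)
  refine Subset.antisymm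
    (isPreconnected_connectedComponentIn.subset_connectedComponentIn hxC hB)
    (subset_of_isPreconnected_of_mem_nhdsWithin isPreconnected_connectedComponentIn
      ⟨x, mem_connectedComponentIn (hB hxC), hxC⟩ fun a ha => ?_)
  rw [(isClosed_connectedComponentIn hA x).closure_eq] at ha
  refine nhdsWithin_mono a (connectedComponentIn_subset B x) ?_
  rw [← nhdsWithin_eq_iff_eventuallyEq.2 (hAB a ha.2)]
  exact hopen a ha.2

end Components

section Superlevel

variable {E : Type*} [NormedAddCommGroup E] [NormedSpace ℝ E] {f : E → ℝ} {y : E} {ℓ : ℝ}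

theorem exists_eventually_lt_add_smul {f' : E →L[ℝ] ℝ} (hf : HasStrictFDerivAt f f' y)
    (hf' : f' ≠ 0) : ∃ e, ∀ᶠ q : E × ℝ in 𝓝 y ×ˢ 𝓝[>] 0, f q.1 < f (q.1 + q.2 • e) := by
  obtain ⟨u, hu⟩ := DFunLike.ne_iff.1 hf'
  obtain ⟨e, he⟩ : ∃ e, 0 < f' e := ⟨f' u • u, by simpa using mul_self_pos.2 hu⟩
  have htendsto : Tendsto (fun q : E × ℝ => (q.1 + q.2 • e, q.1)) (𝓝 y ×ˢ 𝓝[>] 0)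
      (𝓝 (y, y)) := by
    have hcont : Continuous fun q : E × ℝ => (q.1 + q.2 • e, q.1) := by fun_prop
    refine (hcont.tendsto' (y, 0) (y, y) (by simp)).mono_left ?_
    rw [nhds_prod_eq]
    exact prod_mono le_rfl nhdsWithin_le_nhds
  have hc : 0 < f' e / (‖e‖ + 1) := by positivity
  refine ⟨e, ?_⟩
  filter_upwards [htendsto.eventually (hf.isLittleO.def hc),
    tendsto_snd.eventually self_mem_nhdsWithin] with q hq hq0
  have hq0 : 0 < q.2 := hq0
  rw [add_sub_cancel_left, norm_smul, map_smul, smul_eq_mul, Real.norm_of_nonneg hq0.le,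
    Real.norm_eq_abs] at hq
  have hlt : f' e / (‖e‖ + 1) * (q.2 * ‖e‖) < q.2 * f' e := by
    rw [div_mul_eq_mul_div, div_lt_iff₀ (by positivity)]
    nlinarith [mul_pos hq0 he]
  linarith [(abs_le.1 hq).1]

theorem pathComponentIn_superlevel_mem_nhdsWithin (hf : ContDiff ℝ 1 f) (hy : ℓ ≤ f y)
    (hcrit : f y = ℓ → fderiv ℝ f y ≠ 0) :
    pathComponentIn {z | ℓ ≤ f z} y ∈ 𝓝[{z | ℓ ≤ f z}] y := by
  have hnhds : ∀ a, ℓ < f a → pathComponentIn {z | ℓ ≤ f z} a ∈ 𝓝 a := fun a ha =>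
    pathComponentIn_mem_nhds <| (hf.continuous.continuousAt.eventually_const_lt ha).mono
      fun _ => le_of_lt
  rcases hy.lt_or_eq with hlt | heq
  · exact mem_nhdsWithin_of_mem_nhds (hnhds y hlt)
  obtain ⟨e, he⟩ := exists_eventually_lt_add_smul
    (hf.contDiffAt.hasStrictFDerivAt one_ne_zero) (hcrit heq.symm)
  obtain ⟨P, hP, Q, hQ, hPQ⟩ := eventually_prod_iff.1 he
  obtain ⟨ε, hε, hεQ⟩ := (nhdsGT_basis (0 : ℝ)).eventually_iff.1 hQ
  obtain ⟨δ, hδ⟩ := exists_between hε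
  have hclimb : ∀ z, P z → ℓ ≤ f z → JoinedIn {z | ℓ ≤ f z} z (z + δ • e) := fun z hz hzℓ => by
    refine JoinedIn.of_segment_subset ?_
    rw [segment_eq_image']
    rintro _ ⟨θ, hθ, rfl⟩
    simp only [add_sub_cancel_left, smul_smul]
    rcases hθ.1.eq_or_lt with rfl | hθ0
    · simpa using hzℓ
    · exact hzℓ.trans (hPQ hz (hεQ ⟨mul_pos hθ0 hδ.1,
        (mul_le_of_le_one_left hδ.1.le hθ.2).trans_lt hδ.2⟩)).le
  have hyδ : ℓ < f (y + δ • e) := hy.trans_lt (hPQ hP.self_of_nhds (hεQ hδ))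
  have htranslate : Tendsto (fun z => z + δ • e) (𝓝 y) (𝓝 (y + δ • e)) :=
    (continuous_id.add continuous_const).tendsto y
  filter_upwards [self_mem_nhdsWithin, mem_nhdsWithin_of_mem_nhds hP,
    mem_nhdsWithin_of_mem_nhds (htranslate (hnhds _ hyδ))] with z hzℓ hz hjoin
  exact (hclimb y hP.self_of_nhds hy).trans (hjoin.trans (hclimb z hz hzℓ).symm)

end Superlevel

section BoundedPart

variable {d : ℕ} {A D : Set (Euc d)} {x : Euc d}

theorem mem_boundedPart_iff :
    x ∈ boundedPart d A ↔ x ∈ A ∧ Bornology.IsBounded (connectedComponentIn A x) := by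
  simp only [boundedPart, unboundedPart, Set.mem_sdiff, mem_ofPred_eq]
  tauto

theorem mem_unboundedPart_iff : x ∈ unboundedPart d A ↔ x ∈ A ∧ x ∉ boundedPart d A := by
  simp only [boundedPart, unboundedPart, Set.mem_sdiff, mem_ofPred_eq]
  tauto

theorem connectedComponentIn_subset_boundedPart (hx : x ∈ boundedPart d A) :
    connectedComponentIn A x ⊆ boundedPart d A := fun _ hy =>
  mem_boundedPart_iff.2 ⟨connectedComponentIn_subset A x hy,
    connectedComponentIn_eq hy ▸ (mem_boundedPart_iff.1 hx).2⟩

theorem pathComponentIn_boundedPart (hx : x ∈ boundedPart d A) :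
    pathComponentIn (boundedPart d A) x = pathComponentIn A x :=
  Subset.antisymm (pathComponentIn_mono sdiff_subset)
    ((isPathConnected_pathComponentIn hx.1).subset_pathComponentIn
      (mem_pathComponentIn_self hx.1)
      ((pathComponentIn_subset_connectedComponentIn A x).trans
        (connectedComponentIn_subset_boundedPart hx)))

theorem isBounded_boundedPart_inter_connectedComponentIn (A : Set (Euc d)) (x : Euc d) :
    Bornology.IsBounded (boundedPart d A ∩ connectedComponentIn A x) := by
  obtain hempty | ⟨y, hy, hyx⟩ := (boundedPart d A ∩ connectedComponentIn A x).eq_empty_or_nonempty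
  · rw [hempty]
    exact Bornology.isBounded_empty
  · rw [connectedComponentIn_eq hyx]
    exact (mem_boundedPart_iff.1 hy).2.subset inter_subset_right

/-- The union of the bounded components of `A` that meet `D`. -/
def boundedHull (d : ℕ) (A D : Set (Euc d)) : Set (Euc d) :=
  ⋃ x ∈ boundedPart d A ∩ D, connectedComponentIn A x

theorem isBounded_boundedHull (hAD : IsCompact (A ∩ D))
    (hopen : ∀ x ∈ A ∩ D, connectedComponentIn A x ∈ 𝓝[A] x) :
    Bornology.IsBounded (boundedHull d A D) := by
  obtain ⟨T, -, hT⟩ := hAD.elim_nhdsWithin_subcover (connectedComponentIn A) fun x hx =>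
    nhdsWithin_mono x inter_subset_left (hopen x hx)
  have hbdd := (Bornology.isBounded_biUnion_finset T).2 fun c _ =>
    isBounded_boundedPart_inter_connectedComponentIn A c
  refine hbdd.subset (iUnion₂_subset fun x hx y hy => ?_)
  obtain ⟨c, hc, hxc⟩ := mem_iUnion₂.1 (hT ⟨hx.1.1, hx.2⟩)
  refine mem_iUnion₂.2 ⟨c, hc, connectedComponentIn_subset_boundedPart hx.1 hy, ?_⟩
  rwa [connectedComponentIn_eq hxc]

theorem apply_mem_boundedPart (e : Euc d ≃ₜ Euc d) {B : Set (Euc d)} (hA : IsClosed A)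
    (hx : x ∈ boundedPart d A)
    (hopen : ∀ y ∈ connectedComponentIn A x, connectedComponentIn A x ∈ 𝓝[A] y)
    (hAB : ∀ y ∈ connectedComponentIn A x, ∀ᶠ z in 𝓝 y, e z ∈ B ↔ z ∈ A) :
    e x ∈ boundedPart d B := by
  obtain ⟨hxA, hbdd⟩ := mem_boundedPart_iff.1 hx
  have hxB : e x ∈ B := (hAB x (mem_connectedComponentIn hxA)).self_of_nhds.2 hxA
  have hcomp : connectedComponentIn A x = connectedComponentIn (e ⁻¹' B) x :=
    connectedComponentIn_congr_of_eventuallyEq hA hxA hopen fun y hy =>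
      eventuallyEq_set.2 ((hAB y hy).mono fun _ => Iff.symm)
  refine mem_boundedPart_iff.2 ⟨hxB, ?_⟩
  have himage : e '' connectedComponentIn A x = connectedComponentIn B (e x) := by
    rw [hcomp, e.image_connectedComponentIn (s := e ⁻¹' B) hxB, e.image_preimage]
  rw [← himage]
  exact ((isCompact_of_isClosed_isBounded (isClosed_connectedComponentIn hA x) hbdd).image
    e.continuous).isBounded

end BoundedPart

section RegularCubes

variable {d : ℕ} {f : Euc d → ℝ} {ℓ : ℝ} {S : Set (Fin d → ℤ)} {D : Set (Euc d)} {x y : Euc d}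

theorem pathComponentIn_mem_nhdsWithin_of_mem_regularCubes (hf : ContDiff ℝ 1 f)
    {w : Fin d → ℤ} (hw : w ∈ regularCubes f ℓ) (hyw : y ∈ unitCube d w) (hy : ℓ ≤ f y) :
    pathComponentIn {z | ℓ ≤ f z} y ∈ 𝓝[{z | ℓ ≤ f z}] y := by
  refine pathComponentIn_superlevel_mem_nhdsWithin hf hy fun hfy hcrit => ?_
  obtain ⟨s, hs⟩ := exists_mem_openFace hyw
  exact hw y ⟨s, hs, hfy, fun i _ => by rw [hcrit, zero_apply]⟩

theorem connectedComponentIn_eq_pathComponentIn_of_cubesMeeting_subset (hf : ContDiff ℝ 1 f)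
    (hcubes : cubesMeeting d (pathComponentIn {z | ℓ ≤ f z} x) ⊆ regularCubes f ℓ) :
    connectedComponentIn {z | ℓ ≤ f z} x = pathComponentIn {z | ℓ ≤ f z} x := by
  refine connectedComponentIn_eq_pathComponentIn fun a ha => ?_
  obtain ⟨b, hb, hbx⟩ := mem_closure_iff_nhds.1 ha.2 _ (biUnion_unitCube_mem_nhds a)
  obtain ⟨w, hw, hbw⟩ := mem_iUnion₂.1 hb
  exact pathComponentIn_mem_nhdsWithin_of_mem_regularCubes hf (hcubes ⟨b, hbw, hbx⟩)
    (inter_singleton_nonempty.1 hw) ha.1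

theorem connectedComponentIn_mem_nhdsWithin_of_cubesMeeting_subset (hf : ContDiff ℝ 1 f)
    (hcubes : cubesMeeting d (connectedComponentIn {z | ℓ ≤ f z} x) ⊆ regularCubes f ℓ)
    (hy : y ∈ connectedComponentIn {z | ℓ ≤ f z} x) :
    connectedComponentIn {z | ℓ ≤ f z} x ∈ 𝓝[{z | ℓ ≤ f z}] y := by
  obtain ⟨w, hw⟩ := exists_mem_unitCube y
  have hyℓ : y ∈ {z | ℓ ≤ f z} := connectedComponentIn_subset _ _ hy
  rw [connectedComponentIn_eq hy]
  exact mem_of_superset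
    (pathComponentIn_mem_nhdsWithin_of_mem_regularCubes hf (hcubes ⟨y, hw, hy⟩) hw hyℓ)
    (pathComponentIn_subset_connectedComponentIn _ y)

theorem isBounded_boundedHull_superlevel (hf : ContDiff ℝ 1 f) (hD : IsCompact D)
    (hDS : D ⊆ ⋃ w ∈ regularCubes f ℓ, unitCube d w) :
    Bornology.IsBounded (boundedHull d {z | ℓ ≤ f z} D) :=
  isBounded_boundedHull (hD.inter_left (isClosed_le continuous_const hf.continuous))
    fun x hx => by
      obtain ⟨w, hw, hxw⟩ := mem_iUnion₂.1 (hDS hx.2)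
      exact mem_of_superset
        (pathComponentIn_mem_nhdsWithin_of_mem_regularCubes hf hw hxw hx.1)
        (pathComponentIn_subset_connectedComponentIn _ x)

theorem cubesMeeting_boundedHull_superlevel_subset (hf : ContDiff ℝ 1 f)
    (hS : S ⊆ regularCubes f ℓ) (hD : ∀ x ∈ D,
      cubesMeeting d (pathComponentIn (boundedPart d {z | ℓ ≤ f z}) x) ⊆ S) :
    cubesMeeting d (boundedHull d {z | ℓ ≤ f z} D) ⊆ S := by
  rintro w ⟨y, hyw, hy⟩
  obtain ⟨x, hx, hyx⟩ := mem_iUnion₂.1 hy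
  have hcubes := hD x hx.2
  rw [pathComponentIn_boundedPart hx.1] at hcubes
  rw [connectedComponentIn_eq_pathComponentIn_of_cubesMeeting_subset hf (hcubes.trans hS)] at hyx
  exact hcubes ⟨y, hyw, hyx⟩

theorem apply_mem_boundedPart_of_cubesMeeting_boundedHull_subset (e : Euc d ≃ₜ Euc d)
    (hf : ContDiff ℝ 1 f) {W : Set (Fin d → ℤ)} (hW : W ⊆ regularCubes f ℓ)
    (hhull : cubesMeeting d (boundedHull d {z | ℓ ≤ f z} D) ⊆ W) {B : Set (Euc d)}
    (heB : ∀ z ∈ ⋃ w ∈ W, unitCube d w, (e z ∈ B ↔ ℓ ≤ f z))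
    (hx : x ∈ boundedPart d {z | ℓ ≤ f z} ∩ D) : e x ∈ boundedPart d B := by
  have hcubes : cubesMeeting d (connectedComponentIn {z | ℓ ≤ f z} x) ⊆ W :=
    (cubesMeeting_mono (subset_biUnion_of_mem (u := connectedComponentIn _) hx)).trans hhull
  refine apply_mem_boundedPart e (isClosed_le continuous_const hf.continuous) hx.1
    (fun y => connectedComponentIn_mem_nhdsWithin_of_cubesMeeting_subset hf (hcubes.trans hW))
    fun y hy => ?_
  filter_upwards [biUnion_unitCube_mem_nhds y] with z hz
  obtain ⟨w, hw, hzw⟩ := mem_iUnion₂.1 hz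
  exact heB z (mem_iUnion₂.2 ⟨w, hcubes ⟨y, inter_singleton_nonempty.1 hw, hy⟩, hzw⟩)

theorem apply_mem_boundedPart_iff {e : Euc d ≃ₜ Euc d} (he : PreservesLattice e)
    {f' : Euc d → ℝ} (hf : ContDiff ℝ 1 f) (hf' : ContDiff ℝ 1 f') {W : Set (Fin d → ℤ)}
    (hW : W ⊆ regularCubes f ℓ) (hW' : W ⊆ regularCubes f' ℓ)
    (hhull : cubesMeeting d (boundedHull d {z | ℓ ≤ f z} D) ⊆ W)
    (hhull' : cubesMeeting d (boundedHull d {z | ℓ ≤ f' z} D) ⊆ W)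
    (hlevel : ∀ z ∈ ⋃ w ∈ W, unitCube d w, (ℓ ≤ f' (e z) ↔ ℓ ≤ f z))
    (hx : x ∈ D) (hex : e x ∈ D) :
    e x ∈ boundedPart d {z | ℓ ≤ f' z} ↔ x ∈ boundedPart d {z | ℓ ≤ f z} := by
  refine ⟨fun h => ?_, fun h =>
    apply_mem_boundedPart_of_cubesMeeting_boundedHull_subset e hf hW hhull hlevel ⟨h, hx⟩⟩
  have hback : e.symm (e x) ∈ boundedPart d {z | ℓ ≤ f z} :=
    apply_mem_boundedPart_of_cubesMeeting_boundedHull_subset e.symm hf' hW' hhull'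
      (fun z hz => by
        have hsymm : e.symm z ∈ ⋃ w ∈ W, unitCube d w := by
          simpa only [mem_iUnion, he.symm.mem_unitCube_iff] using hz
        simpa using (hlevel (e.symm z) hsymm).symm) ⟨h, hex⟩
  rwa [e.symm_apply_apply] at hback

end RegularCubes

section BoundedComponents

variable {d : ℕ} {ℓ : ℝ}

theorem exists_isLatticeIsotopy_boundedPart {F : ℝ × Euc d → ℝ} (hF : ContDiff ℝ 2 F)
    {S : Set (Fin d → ℤ)}
    (hS : ∀ t ∈ Icc (0 : ℝ) 1, S ⊆ regularCubes (fun x => F (t, x)) ℓ)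
    {ι : Type*} [Finite ι] {v : ι → Fin d → ℤ} (hv : range v ⊆ S)
    (hpath : ∀ t ∈ ({0, 1} : Set ℝ), ∀ x ∈ ⋃ i, unitCube d (v i),
      cubesMeeting d (pathComponentIn (boundedPart d {z | ℓ ≤ F (t, z)}) x) ⊆ S) :
    ∃ φ : ℝ → Euc d ≃ₜ Euc d, IsLatticeIsotopy φ ∧
      (∀ t ∈ Icc (0 : ℝ) 1, ∀ x ∈ ⋃ i, unitCube d (v i),
        (ℓ ≤ F (t, φ t x) ↔ ℓ ≤ F (0, x))) ∧
      ∀ x ∈ ⋃ i, unitCube d (v i), (φ 1 x ∈ boundedPart d {z | ℓ ≤ F (1, z)} ↔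
        x ∈ boundedPart d {z | ℓ ≤ F (0, z)}) := by
  have hzero : (0 : ℝ) ∈ Icc (0 : ℝ) 1 := left_mem_Icc.2 zero_le_one
  have hone : (1 : ℝ) ∈ Icc (0 : ℝ) 1 := right_mem_Icc.2 zero_le_one
  have hFt (t : ℝ) : ContDiff ℝ 1 fun x => F (t, x) :=
    (hF.of_le one_le_two).comp (contDiff_prodMk_right t)
  set D : Set (Euc d) := ⋃ i, unitCube d (v i)
  have hDcompact : IsCompact D := isCompact_iUnion fun i => isCompact_unitCube (v i)
  let hull (t : ℝ) : Set (Fin d → ℤ) := cubesMeeting d (boundedHull d {z | ℓ ≤ F (t, z)} D)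
  have hhull : ∀ t ∈ ({0, 1} : Set ℝ), (hull t).Finite ∧ hull t ⊆ S := fun t ht => by
    have htIcc : t ∈ Icc (0 : ℝ) 1 := by
      rcases ht with rfl | rfl <;> assumption
    have hDS : D ⊆ ⋃ w ∈ regularCubes (fun x => F (t, x)) ℓ, unitCube d w :=
      iUnion_subset fun i => subset_biUnion_of_mem (u := unitCube d)
        (hS t htIcc (hv (mem_range_self i)))
    exact ⟨finite_cubesMeeting (isBounded_boundedHull_superlevel (hFt t) hDcompact hDS),
      cubesMeeting_boundedHull_superlevel_subset (hFt t) (hS t htIcc) (hpath t ht)⟩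
  obtain ⟨hfin₀, hsub₀⟩ := hhull 0 (mem_insert _ _)
  obtain ⟨hfin₁, hsub₁⟩ := hhull 1 (mem_insert_of_mem _ rfl)
  let W : Set (Fin d → ℤ) := range v ∪ (hull 0 ∪ hull 1)
  have hW : ∀ t ∈ Icc (0 : ℝ) 1, W ⊆ regularCubes (fun x => F (t, x)) ℓ := fun t ht =>
    (union_subset hv (union_subset hsub₀ hsub₁)).trans (hS t ht)
  obtain ⟨φ, hφ, hlevel⟩ := exists_isLatticeIsotopy hF
    ((finite_range v).union (hfin₀.union hfin₁)) hW
  have hDW : D ⊆ ⋃ w ∈ W, unitCube d w := iUnion_subset fun i =>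
    subset_biUnion_of_mem (u := unitCube d) (Or.inl (mem_range_self i))
  refine ⟨φ, hφ, fun t ht x hx => hlevel t ht x (hDW hx), fun x hx => ?_⟩
  exact apply_mem_boundedPart_iff (hφ.preservesLattice 1 hone) (hFt 0) (hFt 1)
    (hW 0 hzero) (hW 1 hone) (subset_union_left.trans subset_union_right)
    (subset_union_right.trans subset_union_right) (hlevel 1 hone) hx
    ((hφ.mem_iUnion_unitCube_iff hone).2 hx)

end BoundedComponents

theorem cubesMeeting_pathComponentIn_subset_compl_ULoc {d : ℕ} {g p : Euc d → ℝ} {ℓ : ℝ}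
    {w : Fin d → ℤ} (hw : w ∉ UFR d g p ℓ) {x : Euc d} (hx : x ∈ unitCube d w) :
    cubesMeeting d (pathComponentIn (boundedPart d {z | ℓ ≤ g z}) x) ⊆ (ULoc d g p ℓ)ᶜ ∧
      cubesMeeting d (pathComponentIn (boundedPart d {z | ℓ ≤ g z + p z}) x) ⊆
        (ULoc d g p ℓ)ᶜ :=
  ⟨fun u ⟨y, hyu, hxy⟩ hu => hw (Or.inr ⟨u, hu, Or.inl ⟨x, hx, y, hyu, hxy⟩⟩),
    fun u ⟨y, hyu, hxy⟩ hu => hw (Or.inr ⟨u, hu, Or.inr ⟨x, hx, y, hyu, hxy⟩⟩)⟩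

theorem statement_2_general (d n : ℕ) (ℓ : ℝ) (v : Fin n → Fin d → ℤ)
    (g p : Euc d → ℝ) (hg : ContDiff ℝ 2 g) (hp : ContDiff ℝ 2 p)
    (hstable : ∀ i : Fin n, v i ∉ UFR d g p ℓ) :
    ∃ H : Euc d → ℝ → Euc d, IsStratIsotopy d n v H ∧
      (∀ t ∈ Set.Icc (0:ℝ) 1,
        (fun x => H x t) '' ({x | ℓ ≤ g x} ∩ ⋃ i, unitCube d (v i)) =
          {x | ℓ ≤ g x + t * p x} ∩ ⋃ i, unitCube d (v i)) ∧
      (∀ x ∈ ⋃ i, unitCube d (v i), H x 0 = x) ∧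
      (fun x => H x 1) '' (unboundedPart d {x | ℓ ≤ g x} ∩ ⋃ i, unitCube d (v i)) =
        unboundedPart d {x | ℓ ≤ g x + p x} ∩ ⋃ i, unitCube d (v i) := by
  have hone : (1 : ℝ) ∈ Icc (0 : ℝ) 1 := right_mem_Icc.2 zero_le_one
  have hF : ContDiff ℝ 2 fun q : ℝ × Euc d => g q.2 + q.1 * p q.2 :=
    (hg.comp contDiff_snd).add (contDiff_fst.mul (hp.comp contDiff_snd))
  obtain ⟨φ, hφ, hlevel, hbounded⟩ := exists_isLatticeIsotopy_boundedPart hF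
    (S := (ULoc d g p ℓ)ᶜ) (fun t ht w hw => not_not.1 hw t ht)
    (range_subset_iff.2 fun i hi => hstable i (Or.inl hi)) (by
      rintro t (rfl | rfl) x hx <;> obtain ⟨i, hi⟩ := mem_iUnion.1 hx
      · simpa using (cubesMeeting_pathComponentIn_subset_compl_ULoc (hstable i) hi).1
      · simpa using (cubesMeeting_pathComponentIn_subset_compl_ULoc (hstable i) hi).2)
  simp only [zero_mul, add_zero, one_mul] at hlevel hbounded
  refine ⟨fun x t => φ t x, hφ.isStratIsotopy,
    fun t ht => hφ.image_inter_iUnion_unitCube ht (hlevel t ht), fun x _ => hφ.apply_zero x,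
    hφ.image_inter_iUnion_unitCube hone fun x hx => ?_⟩
  rw [mem_unboundedPart_iff, mem_unboundedPart_iff, hbounded x hx]
  exact and_congr_left' (by simpa using hlevel 1 hone x hx)

/-- If the excursion sets `{g ≥ ℓ} ∩ D` and `{g+p ≥ ℓ} ∩ D` have finitely
many components and no cube of `D` lies in the finite-range unstable set `U_FR(g,p)`,
then there is a stratified isotopy of `D` carrying `{g ≥ ℓ} ∩ D` onto `{g+tp ≥ ℓ} ∩ D`
for every `t`, starting at the identity, and additionally matching up the unbounded
parts at time `1`. -/
theorem statement_2 (d n : ℕ) (hd : 1 ≤ d) (ℓ : ℝ)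
    (v : Fin n → Fin d → ℤ) (hv : Function.Injective v)
    (g p : Euc d → ℝ) (hg : ContDiff ℝ 2 g) (hp : ContDiff ℝ 2 p)
    (hfin₁ : FinitelyManyComponents d ({x | ℓ ≤ g x} ∩ ⋃ i, unitCube d (v i)))
    (hfin₂ : FinitelyManyComponents d ({x | ℓ ≤ g x + p x} ∩ ⋃ i, unitCube d (v i)))
    (hstable : ∀ i : Fin n, v i ∉ UFR d g p ℓ) :
    ∃ H : Euc d → ℝ → Euc d, IsStratIsotopy d n v H ∧
      (∀ t ∈ Set.Icc (0:ℝ) 1,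
        (fun x => H x t) '' ({x | ℓ ≤ g x} ∩ ⋃ i, unitCube d (v i)) =
          {x | ℓ ≤ g x + t * p x} ∩ ⋃ i, unitCube d (v i)) ∧
      (∀ x ∈ ⋃ i, unitCube d (v i), H x 0 = x) ∧
      (fun x => H x 1) '' (unboundedPart d {x | ℓ ≤ g x} ∩ ⋃ i, unitCube d (v i)) =
        unboundedPart d {x | ℓ ≤ g x + p x} ∩ ⋃ i, unitCube d (v i) :=
  statement_2_general d n ℓ v g p hg hp hstable

end
end

section
/- For every d ≥ 1 there exist constants C_d ≥ 20 and C′_d > 0, depending only on d, with the following property. Let B := B_w = w + [0,1]^d be a unit cube, ℓ ∈ ℝ, let g, p : ℝ^d → ℝ be C², and let A₁ ∈ (0,1), A₂ ≥ 1 and A₀ ∈ (0, A₁²/(C_d·A₂)) satisfy: |∇g(x)| > A₁ for every x ∈ B with g(x) = ℓ; ‖∇²g(x)‖ < A₂ for every x ∈ B; sup_{x∈B} max(|p(x)|, |∇p(x)|) < A₀; and p(x) = 0 for every x ∈ B with dist(x, ∂B) ≤ 2A₀/A₁. Then there exists an injective C¹ map φ, defined on a relatively open neighbourhood of {g = ℓ}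 ∩ B in B, of the form φ(x) = x + r_x·∇g(x)/|∇g(x)| with |r_x| ≤ 2A₀/A₁ and (g+p)(φ(x)) = g(x), such that for every open set E ⊆ B with diameter at most A₁/(3A₂) and with dist(E, ∂B) ≥ 2A₀/A₁, one has |ℋ^{d−1}[φ({g = ℓ} ∩ E)] − ℋ^{d−1}[{g = ℓ} ∩ E]| ≤ C′_d·(A₀A₂/A₁²)·ℋ^{d−1}[{g = ℓ} ∩ E]. -/
open MeasureTheory Filter Set Topology Metric
open scoped ENNReal NNReal

noncomputable section

/-!
Where `|∇g x| > A₁`, the function `g + p` has derivative at least `A₁ / 2` along the unit normal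
line at `x`, because `∇g` hardly changes over the distance `2 * A₀ / A₁` and `|∇p| ≤ A₀` is tiny.
As `|p x| ≤ A₀`, it takes the value `g x` at exactly one height `ρ x` with
`|ρ x| ≤ 2 * A₀ / A₁`; `ρ x = 0` when `p x = 0`, which takes care of the points near the boundary,
where the normal line may leave `B`.
Comparing two base points shows that the displacement `ρ • ∇g / |∇g|` is Lipschitz with constant
`K = 32 * (A₀ * A₂ / A₁ ^ 2) ≤ 1 / 2`, and `ρ` is `C¹` by the implicit function theorem. Hence
`φ = id + ρ • ∇g / |∇g|` is injective and distorts distances by factors between `1 - K` and `1 + K`,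
so it distorts the `s`-dimensional Hausdorff measure by factors between `(1 - K) ^ s` and
`(1 + K) ^ s`, both within `2 ^ s * K` of `1`.
-/

section RpowBounds

variable {s t : ℝ}

theorem one_add_rpow_le_one_add_mul (hs : 0 ≤ s) (ht : 0 ≤ t) (ht1 : t ≤ 1) :
    (1 + t) ^ s ≤ 1 + 2 ^ s * t := by
  rcases le_total s 1 with hs1 | hs1
  · have h2 : s ≤ 2 ^ s := hs1.trans (Real.one_le_rpow one_le_two hs)
    calc (1 + t) ^ s ≤ 1 + s * t := rpow_one_add_le_one_add_mul_self (by linarith) hs hs1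
      _ ≤ 1 + 2 ^ s * t := by gcongr
  · have hconv := (convexOn_rpow hs1).2 (mem_Ici.2 zero_le_one) (mem_Ici.2 zero_le_two)
      (sub_nonneg.2 ht1) ht (sub_add_cancel 1 t)
    have hpt : (1 - t) * 1 + t * 2 = 1 + t := by ring
    simp only [smul_eq_mul, hpt, Real.one_rpow] at hconv
    linarith

theorem one_sub_mul_le_one_sub_rpow (hs : 0 ≤ s) (ht : 0 ≤ t) (ht1 : t ≤ 1) :
    1 - 2 ^ s * t ≤ (1 - t) ^ s := by
  rcases le_total s 1 with hs1 | hs1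
  · have h2 : 1 ≤ (2 : ℝ) ^ s := Real.one_le_rpow one_le_two hs
    calc 1 - 2 ^ s * t ≤ (1 - t) ^ (1 : ℝ) := by
          rw [Real.rpow_one]; linarith [le_mul_of_one_le_left ht h2]
      _ ≤ (1 - t) ^ s :=
        Real.rpow_le_rpow_of_exponent_ge' (by linarith) (by linarith) hs hs1
  · have h2 : 1 + s * 1 ≤ (1 + 1) ^ s := one_add_mul_self_le_rpow_one_add (by norm_num) hs1
    have hst : s ≤ 2 ^ s := by norm_num at h2; linarith
    calc 1 - 2 ^ s * t ≤ 1 + s * -t := by linarith [mul_le_mul_of_nonneg_right hst ht]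
      _ ≤ (1 + -t) ^ s := one_add_mul_self_le_rpow_one_add (by linarith) hs1
      _ = (1 - t) ^ s := by rw [sub_eq_add_neg]

end RpowBounds

section LipschitzPerturbationOfIdentity

variable {E : Type*} [NormedAddCommGroup E] {u : E → E} {S : Set E} {K : ℝ≥0}

theorem antilipschitzWith_restrict_id_add (hu : LipschitzOnWith K u S) (hK : K < 1) :
    AntilipschitzWith (1 - K)⁻¹ (S.domRestrict fun x => x + u x) := by
  have h := (AntilipschitzWith.subtype_coe S).add_lipschitzWith hu.to_restrict (by rwa [inv_one])
  rw [inv_one] at h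
  exact h

theorem injOn_id_add (hu : LipschitzOnWith K u S) (hK : K < 1) : InjOn (fun x => x + u x) S :=
  injOn_iff_injective.2 (antilipschitzWith_restrict_id_add hu hK).injective

variable [MeasurableSpace E] [BorelSpace E] {s : ℝ}

theorem hausdorffMeasure_image_id_add_le (hu : LipschitzOnWith K u S) (hs : 0 ≤ s) :
    μH[s] ((fun x => x + u x) '' S) ≤ (↑(1 + K) : ℝ≥0∞) ^ s * μH[s] S :=
  (LipschitzWith.id.lipschitzOnWith.add hu).hausdorffMeasure_image_le hs

theorem hausdorffMeasure_le_image_id_add (hu : LipschitzOnWith K u S) (hK : K < 1) (hs : 0 ≤ s) :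
    μH[s] S ≤ (↑(1 - K)⁻¹ : ℝ≥0∞) ^ s * μH[s] ((fun x => x + u x) '' S) := by
  have h := (antilipschitzWith_restrict_id_add hu hK).le_hausdorffMeasure_image hs univ
  rwa [← isometry_subtype_coe.hausdorffMeasure_image (.inl hs), image_univ, image_univ,
    Subtype.range_coe, range_domRestrict] at h

theorem abs_toReal_hausdorffMeasure_image_id_add_sub_le (hu : LipschitzOnWith K u S) (hK : K < 1)
    (hs : 0 ≤ s) :
    |(μH[s] ((fun x => x + u x) '' S)).toReal - (μH[s] S).toReal| ≤
      2 ^ s * K * (μH[s] S).toReal := by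
  have hupper := hausdorffMeasure_image_id_add_le hu hs
  have hlower := hausdorffMeasure_le_image_id_add hu hK hs
  set a := μH[s] S
  set b := μH[s] ((fun x => x + u x) '' S)
  have hpow (c : ℝ≥0) : (c : ℝ≥0∞) ^ s ≠ ∞ := ENNReal.rpow_ne_top_of_nonneg hs ENNReal.coe_ne_top
  by_cases ha : a = ∞
  · have hb : b = ∞ := by
      by_contra hb
      exact ENNReal.mul_ne_top (hpow _) hb (top_unique (ha ▸ hlower))
    simp [ha, hb]
  have hb : b ≠ ∞ := ne_top_of_le_ne_top (ENNReal.mul_ne_top (hpow _) ha) hupper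
  have hK' : (0 : ℝ) < 1 - K := sub_pos.2 (mod_cast hK)
  have hb_le : b.toReal ≤ (1 + K) ^ s * a.toReal := by
    have h := ENNReal.toReal_mono (ENNReal.mul_ne_top (hpow _) ha) hupper
    rwa [ENNReal.toReal_mul, ← ENNReal.toReal_rpow, ENNReal.coe_toReal, NNReal.coe_add,
      NNReal.coe_one] at h
  have hle_b : (1 - K) ^ s * a.toReal ≤ b.toReal := by
    have h := ENNReal.toReal_mono (ENNReal.mul_ne_top (hpow _) hb) hlower
    rwa [ENNReal.toReal_mul, ← ENNReal.toReal_rpow, ENNReal.coe_toReal, NNReal.coe_inv,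
      NNReal.coe_sub hK.le, NNReal.coe_one, Real.inv_rpow hK'.le,
      ← div_eq_inv_mul, le_div_iff₀' (Real.rpow_pos_of_pos hK' s)] at h
  have hadd := mul_le_mul_of_nonneg_right
    (one_add_rpow_le_one_add_mul hs K.coe_nonneg (by linarith)) a.toReal_nonneg
  have hsub := mul_le_mul_of_nonneg_right
    (one_sub_mul_le_one_sub_rpow hs K.coe_nonneg (by linarith)) a.toReal_nonneg
  exact abs_sub_le_iff.2 ⟨by linarith, by linarith⟩

end LipschitzPerturbationOfIdentity

section ImplicitFunction

theorem contDiffWithinAt_of_implicit {𝕜 E F G : Type*} [RCLike 𝕜]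
    [NormedAddCommGroup E] [NormedSpace 𝕜 E] [CompleteSpace E]
    [NormedAddCommGroup F] [NormedSpace 𝕜 F] [CompleteSpace F]
    [NormedAddCommGroup G] [NormedSpace 𝕜 G] [CompleteSpace G]
    {n : WithTop ℕ∞} {f : E × F → G} {ρ : E → F} {V : Set E} {x : E}
    (hf : ContDiffAt 𝕜 n f (x, ρ x)) (hn : n ≠ 0)
    (hinv : (fderiv 𝕜 f (x, ρ x) ∘L .inr 𝕜 E F).IsInvertible) (hρ : ContinuousWithinAt ρ V x)
    (heq : ∀ y ∈ V, f (y, ρ y) = f (x, ρ x)) : ContDiffWithinAt 𝕜 n ρ V x := by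
  refine (hf.contDiffAt_implicitFunction hn hinv).contDiffWithinAt.congr_of_eventuallyEq ?_
    (hf.implicitFunction_apply_self hn hinv).symm
  have hgraph : Tendsto (fun y => (y, ρ y)) (𝓝[V] x) (𝓝 (x, ρ x)) :=
    continuousWithinAt_id.tendsto.prodMk_nhds hρ
  filter_upwards [hgraph.eventually (hf.eventually_apply_eq_iff_implicitFunction hn hinv),
    self_mem_nhdsWithin] with y hy hyV
  exact (hy.1 (heq y hyV)).symm

theorem isInvertible_fderiv_comp_inr {𝕜 E : Type*} [NontriviallyNormedField 𝕜]
    [NormedAddCommGroup E] [NormedSpace 𝕜 E] {f : E × 𝕜 → 𝕜} {x : E} {r a : 𝕜}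
    (hf : DifferentiableAt 𝕜 f (x, r)) (hfr : HasDerivAt (fun t => f (x, t)) a r) (ha : a ≠ 0) :
    (fderiv 𝕜 f (x, r) ∘L .inr 𝕜 E 𝕜).IsInvertible := by
  have hpartial : HasDerivAt (fun t => f (x, t)) (fderiv 𝕜 f (x, r) (0, 1)) r :=
    hf.hasFDerivAt.comp_hasDerivAt r ((hasDerivAt_const r x).prodMk (hasDerivAt_id r))
  refine ⟨ContinuousLinearEquiv.unitsEquivAut 𝕜 (Units.mk0 a ha), ?_⟩
  ext
  simp [hfr.unique hpartial]

end ImplicitFunction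

section NormedSpace

theorem subset_of_isPreconnected_of_disjoint_frontier {X : Type*} [TopologicalSpace X] {S B : Set X}
    (hS : IsPreconnected S) (hdisj : Disjoint (frontier B) S) (hne : (S ∩ B).Nonempty) :
    S ⊆ B := by
  have hint {y : X} (hyS : y ∈ S) (hy : y ∈ closure B) : y ∈ interior B :=
    by_contra fun hy' => disjoint_left.1 hdisj ⟨hy, hy'⟩ hyS
  obtain ⟨x, hxS, hxB⟩ := hne
  refine (hS.subset_of_closure_inter_subset isOpen_interior
    ⟨x, hxS, hint hxS (subset_closure hxB)⟩ fun y hy => ?_).trans interior_subset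
  exact hint hy.2 (closure_mono interior_subset hy.1)

variable {V : Type*} [NormedAddCommGroup V] [NormedSpace ℝ V]

theorem closedBall_subset_of_lt_infDist_frontier {B : Set V} {x : V} {δ : ℝ} (hx : x ∈ B)
    (h : δ < infDist x (frontier B)) : closedBall x δ ⊆ B := by
  rcases lt_or_ge δ 0 with hδ | hδ
  · simp only [closedBall_eq_empty.2 hδ, empty_subset]
  · exact subset_of_isPreconnected_of_disjoint_frontier (convex_closedBall x δ).isPreconnected
      (disjoint_closedBall_of_lt_infDist h).symm ⟨x, mem_closedBall_self hδ, hx⟩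

theorem norm_normalize_le_one (a : V) : ‖NormedSpace.normalize a‖ ≤ 1 := by
  rcases eq_or_ne a 0 with rfl | ha
  · simp
  · exact (NormedSpace.norm_normalize ha).le

theorem norm_mul_norm_normalize_sub_le (a b : V) :
    ‖a‖ * ‖NormedSpace.normalize a - NormedSpace.normalize b‖ ≤ 2 * ‖a - b‖ := by
  calc ‖a‖ * ‖NormedSpace.normalize a - NormedSpace.normalize b‖
      = ‖(a - b) + (‖b‖ - ‖a‖) • NormedSpace.normalize b‖ := by
        rw [← norm_norm a, ← norm_smul, norm_norm, smul_sub, sub_smul,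
          NormedSpace.norm_smul_normalize, NormedSpace.norm_smul_normalize]
        congr 1; abel
    _ ≤ ‖a - b‖ + |‖b‖ - ‖a‖| * ‖NormedSpace.normalize b‖ := by
        rw [← Real.norm_eq_abs, ← norm_smul]; exact norm_add_le _ _
    _ ≤ ‖a - b‖ + ‖a - b‖ * 1 := by
        gcongr
        · rw [abs_sub_comm]; exact abs_norm_sub_norm_le a b
        · exact norm_normalize_le_one b
    _ = 2 * ‖a - b‖ := by ring

end NormedSpace

section InnerProductSpace

variable {H : Type*} [NormedAddCommGroup H] [InnerProductSpace ℝ H]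

theorem real_inner_normalize_self (a : H) : inner ℝ a (NormedSpace.normalize a) = ‖a‖ := by
  rcases eq_or_ne a 0 with rfl | ha
  · simp
  · rw [NormedSpace.normalize, real_inner_smul_right, real_inner_self_eq_norm_sq, sq,
      inv_mul_cancel_left₀ (norm_ne_zero_iff.2 ha)]

theorem abs_inner_sub_inner_le (a b n m : H) :
    |inner ℝ a n - inner ℝ b m| ≤ ‖a‖ * ‖n - m‖ + ‖a - b‖ * ‖m‖ :=
  calc |inner ℝ a n - inner ℝ b m| = |inner ℝ a (n - m) + inner ℝ (a - b) m| := by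
        rw [inner_sub_right, inner_sub_left, sub_add_sub_cancel]
    _ ≤ |inner ℝ a (n - m)| + |inner ℝ (a - b) m| := abs_add_le _ _
    _ ≤ ‖a‖ * ‖n - m‖ + ‖a - b‖ * ‖m‖ :=
        add_le_add (abs_real_inner_le_norm _ _) (abs_real_inner_le_norm _ _)

variable [CompleteSpace H] {g : H → ℝ}

theorem contDiff_gradient {n : WithTop ℕ∞} (hg : ContDiff ℝ (n + 1) g) :
    ContDiff ℝ n (gradient g) :=
  (InnerProductSpace.toDual ℝ H).symm.contDiff.comp (hg.fderiv_right le_rfl)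

theorem norm_gradient_sub_gradient (x y : H) :
    ‖gradient g x - gradient g y‖ = ‖fderiv ℝ g x - fderiv ℝ g y‖ := by
  rw [gradient, gradient, ← map_sub, LinearIsometryEquiv.norm_map]

theorem norm_gradient (x : H) : ‖gradient g x‖ = ‖fderiv ℝ g x‖ :=
  LinearIsometryEquiv.norm_map _ _

theorem hasDerivAt_comp_add_smul {x n : H} {t : ℝ} (hg : DifferentiableAt ℝ g (x + t • n)) :
    HasDerivAt (fun t : ℝ => g (x + t • n)) (inner ℝ (gradient g (x + t • n)) n) t := by
  have hline : HasDerivAt (fun t : ℝ => x + t • n) n t := by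
    simpa using ((hasDerivAt_id t).smul_const n).const_add x
  rw [inner_gradient_left]
  exact hg.hasFDerivAt.comp_hasDerivAt t hline

end InnerProductSpace

section NormalLines

variable {H : Type*} [NormedAddCommGroup H] [InnerProductSpace ℝ H] [CompleteSpace H]
  {B : Set H} {g p : H → ℝ} {A₀ A₁ A₂ δ r s : ℝ} {x y : H}

/-- The unit normal `∇g / |∇g|` to the level sets of `g`; it is `0` at critical points of `g`. -/
def unitNormal (g : H → ℝ) (x : H) : H := NormedSpace.normalize (gradient g x)

/-- The point at signed height `r` on the line through `x` normal to the level set of `g`. -/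
def normalPoint (g : H → ℝ) (x : H) (r : ℝ) : H := x + r • unitNormal g x

/-- The excess of `g + p` at height `r` on the normal line at `x` over the value `g x`; its zeros
are the heights at which `g + p` takes the value that `g` takes at the base point. -/
def normalDefect (g p : H → ℝ) (x : H) (r : ℝ) : ℝ :=
  g (normalPoint g x r) + p (normalPoint g x r) - g x

/-- The heights of absolute value at most `δ` at which the normal line at `x` lies in `B`. -/
def normalRange (B : Set H) (g : H → ℝ) (δ : ℝ) (x : H) : Set ℝ :=
  Icc (-δ) δ ∩ normalPoint g x ⁻¹' B

/-- The admissible heights `r_x` of the normal projection of `x`. -/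
def normalRoots (B : Set H) (g p : H → ℝ) (δ : ℝ) (x : H) : Set ℝ :=
  {r ∈ normalRange B g δ x | normalDefect g p x r = 0}

/-- The part of `B` on which the gradient of `g` exceeds `a` in norm; it is the domain of the
normal projection. -/
def steepSet (B : Set H) (g : H → ℝ) (a : ℝ) : Set H := {x | a < ‖gradient g x‖} ∩ B

/-- On the convex set `B` the perturbation `p` is small relative to the gradient scale `A₁` and the
Hessian scale `A₂` of `g`. That `p` vanishes near the boundary of `B` is encoded as
`closedBall_subset`: where `p` does not vanish, moving by at most `2 * A₀ / A₁` cannot leave `B`. -/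
structure IsSmallPerturbation (B : Set H) (g p : H → ℝ) (A₀ A₁ A₂ : ℝ) : Prop where
  convex : Convex ℝ B
  contDiff_left : ContDiff ℝ 2 g
  contDiff_right : ContDiff ℝ 1 p
  A₀_nonneg : 0 ≤ A₀
  A₁_pos : 0 < A₁
  A₁_le_A₂ : A₁ ≤ A₂
  small : 64 * (A₀ * A₂) ≤ A₁ ^ 2
  norm_hessian_left_le : ∀ x ∈ B, ‖fderiv ℝ (fderiv ℝ g) x‖ ≤ A₂
  abs_right_le : ∀ x ∈ B, |p x| ≤ A₀
  norm_gradient_right_le : ∀ x ∈ B, ‖gradient p x‖ ≤ A₀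
  closedBall_subset : ∀ x ∈ B, p x ≠ 0 → closedBall x (2 * A₀ / A₁) ⊆ B

theorem norm_unitNormal_le_one : ‖unitNormal g x‖ ≤ 1 := norm_normalize_le_one _

theorem inner_gradient_unitNormal : inner ℝ (gradient g x) (unitNormal g x) = ‖gradient g x‖ :=
  real_inner_normalize_self _

theorem normalPoint_zero : normalPoint g x 0 = x := by
  rw [normalPoint, zero_smul, add_zero]

theorem normalDefect_zero : normalDefect g p x 0 = p x := by
  rw [normalDefect, normalPoint_zero, add_sub_cancel_left]

theorem normalDefect_eq_zero_iff :
    normalDefect g p x r = 0 ↔ g (normalPoint g x r) + p (normalPoint g x r) = g x :=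
  sub_eq_zero

theorem norm_normalPoint_sub_le : ‖normalPoint g x r - x‖ ≤ |r| := by
  rw [normalPoint, add_sub_cancel_left, norm_smul, Real.norm_eq_abs]
  exact mul_le_of_le_one_right (abs_nonneg r) norm_unitNormal_le_one

theorem convex_normalRange (hB : Convex ℝ B) : Convex ℝ (normalRange B g δ x) :=
  (convex_Icc _ _).inter
    ((hB.translate_preimage_right x).linear_preimage (LinearMap.toSpanSingleton ℝ H _))

theorem abs_le_of_mem_normalRange (hr : r ∈ normalRange B g δ x) : |r| ≤ δ := abs_le.2 hr.1

theorem hasDerivAt_normalDefect (hg : Differentiable ℝ g) (hp : Differentiable ℝ p) :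
    HasDerivAt (normalDefect g p x)
      (inner ℝ (gradient g (normalPoint g x r) + gradient p (normalPoint g x r))
        (unitNormal g x)) r := by
  rw [inner_add_left]
  exact ((hasDerivAt_comp_add_smul (hg _)).add (hasDerivAt_comp_add_smul (hp _))).sub_const _

theorem contDiffAt_unitNormal {n : WithTop ℕ∞} (hg : ContDiff ℝ (n + 1) g)
    (hx : gradient g x ≠ 0) : ContDiffAt ℝ n (unitNormal g) x := by
  have h := (contDiff_gradient hg).contDiffAt (x := x)
  exact ((h.norm ℝ hx).inv (norm_ne_zero_iff.2 hx)).smul h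

theorem contDiffAt_normalDefect {n : WithTop ℕ∞} (hg : ContDiff ℝ (n + 1) g)
    (hp : ContDiff ℝ n p) (hx : gradient g x ≠ 0) :
    ContDiffAt ℝ n (fun z : H × ℝ => normalDefect g p z.1 z.2) (x, r) := by
  have hg' : ContDiff ℝ n g := hg.of_le le_self_add
  have hpoint : ContDiffAt ℝ n (fun z : H × ℝ => normalPoint g z.1 z.2) (x, r) :=
    contDiffAt_fst.add (contDiffAt_snd.smul
      ((contDiffAt_unitNormal hg hx).comp (x, r) (f := Prod.fst) contDiffAt_fst))
  exact ((hg'.contDiffAt.comp _ hpoint).add (hp.contDiffAt.comp _ hpoint)).sub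
    (hg'.contDiffAt.comp _ contDiffAt_fst)

theorem gradient_ne_zero_of_mem_steepSet {a : ℝ} (ha : 0 ≤ a) (hx : x ∈ steepSet B g a) :
    gradient g x ≠ 0 :=
  norm_pos_iff.1 (ha.trans_lt hx.1)

namespace IsSmallPerturbation

theorem differentiable_left (h : IsSmallPerturbation B g p A₀ A₁ A₂) : Differentiable ℝ g :=
  h.contDiff_left.differentiable two_ne_zero

theorem differentiable_right (h : IsSmallPerturbation B g p A₀ A₁ A₂) : Differentiable ℝ p :=
  h.contDiff_right.differentiable one_ne_zero

theorem A₂_pos (h : IsSmallPerturbation B g p A₀ A₁ A₂) : 0 < A₂ := h.A₁_pos.trans_le h.A₁_le_A₂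

theorem two_mul_A₀_div_A₁_nonneg (h : IsSmallPerturbation B g p A₀ A₁ A₂) : 0 ≤ 2 * A₀ / A₁ :=
  div_nonneg (mul_nonneg zero_le_two h.A₀_nonneg) h.A₁_pos.le

theorem A₀_le_A₁_div (h : IsSmallPerturbation B g p A₀ A₁ A₂) : A₀ ≤ A₁ / 64 := by
  have hA₀A₁ := mul_le_mul_of_nonneg_left h.A₁_le_A₂ h.A₀_nonneg
  have hsmall : 64 * A₀ * A₁ ≤ A₁ * A₁ := by linarith [h.small]
  linarith [le_of_mul_le_mul_right hsmall h.A₁_pos]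

theorem A₂_mul_two_mul_A₀_div_A₁_le (h : IsSmallPerturbation B g p A₀ A₁ A₂) :
    A₂ * (2 * A₀ / A₁) ≤ A₁ / 32 := by
  rw [← mul_div_assoc, div_le_iff₀ h.A₁_pos]
  linarith [h.small]

theorem A₀_mul_A₂_div_sq_nonneg (h : IsSmallPerturbation B g p A₀ A₁ A₂) : 0 ≤ A₀ * A₂ / A₁ ^ 2 :=
  div_nonneg (mul_nonneg h.A₀_nonneg h.A₂_pos.le) (sq_nonneg _)

theorem A₀_mul_A₂_div_sq_le (h : IsSmallPerturbation B g p A₀ A₁ A₂) :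
    A₀ * A₂ / A₁ ^ 2 ≤ 1 / 64 := by
  rw [div_le_iff₀ (pow_pos h.A₁_pos 2)]
  linarith [h.small]

theorem norm_gradient_left_sub_le (h : IsSmallPerturbation B g p A₀ A₁ A₂) (hx : x ∈ B)
    (hy : y ∈ B) : ‖gradient g x - gradient g y‖ ≤ A₂ * ‖x - y‖ := by
  have hdiff : Differentiable ℝ (fderiv ℝ g) :=
    (h.contDiff_left.fderiv_right one_add_one_eq_two.le).differentiable one_ne_zero
  rw [norm_gradient_sub_gradient]
  exact h.convex.norm_image_sub_le_of_norm_fderiv_le (fun z _ => hdiff z)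
    h.norm_hessian_left_le hy hx

theorem abs_right_sub_le (h : IsSmallPerturbation B g p A₀ A₁ A₂) (hx : x ∈ B) (hy : y ∈ B) :
    |p x - p y| ≤ A₀ * ‖x - y‖ :=
  h.convex.norm_image_sub_le_of_norm_fderiv_le (fun z _ => h.differentiable_right z)
    (fun z hz => (norm_gradient z).symm.trans_le (h.norm_gradient_right_le z hz)) hy hx

theorem zero_mem_normalRange (h : IsSmallPerturbation B g p A₀ A₁ A₂) (hx : x ∈ B) :
    0 ∈ normalRange B g (2 * A₀ / A₁) x :=
  ⟨⟨neg_nonpos.2 h.two_mul_A₀_div_A₁_nonneg, h.two_mul_A₀_div_A₁_nonneg⟩,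
    by rwa [mem_preimage, normalPoint_zero]⟩

theorem normalRange_eq_Icc (h : IsSmallPerturbation B g p A₀ A₁ A₂) (hx : x ∈ B)
    (hpx : p x ≠ 0) : normalRange B g (2 * A₀ / A₁) x = Icc (-(2 * A₀ / A₁)) (2 * A₀ / A₁) := by
  refine inter_eq_left.2 fun r hr => h.closedBall_subset x hx hpx ?_
  rw [mem_closedBall, dist_eq_norm]
  exact norm_normalPoint_sub_le.trans (abs_le.2 hr)

theorem norm_gradient_normalPoint_sub_le (h : IsSmallPerturbation B g p A₀ A₁ A₂) (hx : x ∈ B)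
    (hr : r ∈ normalRange B g (2 * A₀ / A₁) x) :
    ‖gradient g (normalPoint g x r) - gradient g x‖ ≤ A₁ / 32 :=
  calc ‖gradient g (normalPoint g x r) - gradient g x‖
      ≤ A₂ * ‖normalPoint g x r - x‖ := h.norm_gradient_left_sub_le hr.2 hx
    _ ≤ A₂ * (2 * A₀ / A₁) := mul_le_mul_of_nonneg_left
        (norm_normalPoint_sub_le.trans (abs_le_of_mem_normalRange hr)) h.A₂_pos.le
    _ ≤ A₁ / 32 := h.A₂_mul_two_mul_A₀_div_A₁_le

theorem half_le_inner_gradient_unitNormal (h : IsSmallPerturbation B g p A₀ A₁ A₂)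
    (hx : x ∈ steepSet B g A₁) (hr : r ∈ normalRange B g (2 * A₀ / A₁) x) :
    A₁ / 2 ≤ inner ℝ (gradient g (normalPoint g x r) + gradient p (normalPoint g x r))
      (unitNormal g x) := by
  have habs (v : H) : |inner ℝ v (unitNormal g x)| ≤ ‖v‖ :=
    (abs_real_inner_le_norm _ _).trans
      (mul_le_of_le_one_right (norm_nonneg v) norm_unitNormal_le_one)
  have hg := (habs _).trans (h.norm_gradient_normalPoint_sub_le hx.2 hr)
  have hp := (habs _).trans (h.norm_gradient_right_le _ hr.2)
  rw [inner_sub_left, inner_gradient_unitNormal] at hg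
  have hsteep : A₁ < ‖gradient g x‖ := hx.1
  rw [inner_add_left]
  linarith [(abs_le.1 hg).1, (abs_le.1 hp).1, h.A₀_le_A₁_div, h.A₁_pos]

theorem mul_sub_le_normalDefect_sub (h : IsSmallPerturbation B g p A₀ A₁ A₂)
    (hx : x ∈ steepSet B g A₁) (hr : r ∈ normalRange B g (2 * A₀ / A₁) x)
    (hs : s ∈ normalRange B g (2 * A₀ / A₁) x) (hrs : r ≤ s) :
    A₁ / 2 * (s - r) ≤ normalDefect g p x s - normalDefect g p x r := by
  have hder (t : ℝ) := hasDerivAt_normalDefect (x := x) (r := t)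
    h.differentiable_left h.differentiable_right
  refine (convex_normalRange h.convex).mul_sub_le_image_sub_of_le_deriv
    (fun t _ => (hder t).continuousAt.continuousWithinAt)
    (fun t _ => (hder t).differentiableAt.differentiableWithinAt) (fun t ht => ?_) r hr s hs hrs
  rw [(hder t).deriv]
  exact h.half_le_inner_gradient_unitNormal hx (interior_subset ht)

theorem mul_abs_sub_le_abs_normalDefect_sub (h : IsSmallPerturbation B g p A₀ A₁ A₂)
    (hx : x ∈ steepSet B g A₁) (hr : r ∈ normalRange B g (2 * A₀ / A₁) x)
    (hs : s ∈ normalRange B g (2 * A₀ / A₁) x) :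
    A₁ / 2 * |r - s| ≤ |normalDefect g p x r - normalDefect g p x s| := by
  wlog hrs : s ≤ r generalizing r s
  · rw [abs_sub_comm, abs_sub_comm (normalDefect g p x r)]
    exact this hs hr (le_of_not_ge hrs)
  rw [abs_of_nonneg (sub_nonneg.2 hrs)]
  exact (h.mul_sub_le_normalDefect_sub hx hs hr hrs).trans (le_abs_self _)

theorem nonempty_normalRoots (h : IsSmallPerturbation B g p A₀ A₁ A₂)
    (hx : x ∈ steepSet B g A₁) : (normalRoots B g p (2 * A₀ / A₁) x).Nonempty := by
  have hzero := h.zero_mem_normalRange (g := g) hx.2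
  by_cases hpx : p x = 0
  · exact ⟨0, hzero, normalDefect_zero.trans hpx⟩
  have hδ := h.two_mul_A₀_div_A₁_nonneg
  have hIcc := h.normalRange_eq_Icc (g := g) hx.2 hpx
  have hA₀ : A₁ / 2 * (2 * A₀ / A₁) = A₀ := by field_simp [h.A₁_pos.ne']
  have hp := abs_le.1 (h.abs_right_le x hx.2)
  have hupper := h.mul_sub_le_normalDefect_sub hx hzero
    (hIcc.symm ▸ right_mem_Icc.2 (neg_le_self hδ)) hδ
  have hlower := h.mul_sub_le_normalDefect_sub hx
    (hIcc.symm ▸ left_mem_Icc.2 (neg_le_self hδ)) hzero (neg_nonpos.2 hδ)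
  rw [normalDefect_zero] at hupper hlower
  have hcont : Continuous (normalDefect g p x) := continuous_iff_continuousAt.2 fun _ =>
    (hasDerivAt_normalDefect h.differentiable_left h.differentiable_right).continuousAt
  obtain ⟨r, hr, hroot⟩ := intermediate_value_Icc (neg_le_self hδ) hcont.continuousOn
    (show (0 : ℝ) ∈ Icc _ _ from ⟨by linarith, by linarith⟩)
  exact ⟨r, hIcc.symm ▸ hr, hroot⟩

theorem eq_zero_of_mem_normalRoots (h : IsSmallPerturbation B g p A₀ A₁ A₂)
    (hx : x ∈ steepSet B g A₁) (hpx : p x = 0) (hr : r ∈ normalRoots B g p (2 * A₀ / A₁) x) :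
    r = 0 := by
  have hle := h.mul_abs_sub_le_abs_normalDefect_sub hx hr.1 (h.zero_mem_normalRange hx.2)
  rw [hr.2, normalDefect_zero, hpx, sub_self, abs_zero, sub_zero] at hle
  exact abs_nonpos_iff.1 (nonpos_of_mul_nonpos_right hle (half_pos h.A₁_pos))

theorem norm_gradient_mul_norm_unitNormal_sub_le (h : IsSmallPerturbation B g p A₀ A₁ A₂)
    (hx : x ∈ B) (hy : y ∈ B) :
    ‖gradient g x‖ * ‖unitNormal g x - unitNormal g y‖ ≤ 2 * A₂ * ‖x - y‖ :=
  calc ‖gradient g x‖ * ‖unitNormal g x - unitNormal g y‖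
      ≤ 2 * ‖gradient g x - gradient g y‖ := norm_mul_norm_normalize_sub_le _ _
    _ ≤ 2 * A₂ * ‖x - y‖ := by linarith [h.norm_gradient_left_sub_le hx hy]

theorem abs_mul_norm_unitNormal_sub_le (h : IsSmallPerturbation B g p A₀ A₁ A₂)
    (hx : x ∈ steepSet B g A₁) (hy : y ∈ B) (hr : |r| ≤ 2 * A₀ / A₁) :
    |r| * ‖unitNormal g x - unitNormal g y‖ ≤ 4 * (A₀ * A₂ / A₁ ^ 2) * ‖x - y‖ := by
  have hA₁ := h.A₁_pos
  have hnormal : ‖unitNormal g x - unitNormal g y‖ ≤ 2 * A₂ * ‖x - y‖ / A₁ := by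
    rw [le_div_iff₀' hA₁]
    exact (mul_le_mul_of_nonneg_right hx.1.le (norm_nonneg _)).trans
      (h.norm_gradient_mul_norm_unitNormal_sub_le hx.2 hy)
  calc |r| * ‖unitNormal g x - unitNormal g y‖
      ≤ 2 * A₀ / A₁ * (2 * A₂ * ‖x - y‖ / A₁) :=
        mul_le_mul hr hnormal (norm_nonneg _) h.two_mul_A₀_div_A₁_nonneg
    _ = 4 * (A₀ * A₂ / A₁ ^ 2) * ‖x - y‖ := by field_simp; ring

theorem norm_normalPoint_sub_normalPoint_le (h : IsSmallPerturbation B g p A₀ A₁ A₂)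
    (hx : x ∈ steepSet B g A₁) (hy : y ∈ B) (hr : |r| ≤ 2 * A₀ / A₁) :
    ‖normalPoint g x r - normalPoint g y r‖ ≤ 2 * ‖x - y‖ := by
  have hnormal := h.abs_mul_norm_unitNormal_sub_le hx hy hr
  have hratio := mul_le_mul_of_nonneg_right h.A₀_mul_A₂_div_sq_le (norm_nonneg (x - y))
  calc ‖normalPoint g x r - normalPoint g y r‖
      = ‖(x - y) + r • (unitNormal g x - unitNormal g y)‖ := by
        rw [normalPoint, normalPoint, add_sub_add_comm, smul_sub]
    _ ≤ ‖x - y‖ + |r| * ‖unitNormal g x - unitNormal g y‖ := by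
        rw [← Real.norm_eq_abs, ← norm_smul]; exact norm_add_le _ _
    _ ≤ 2 * ‖x - y‖ := by linarith [norm_nonneg (x - y)]

theorem norm_gradient_normalPoint_le (h : IsSmallPerturbation B g p A₀ A₁ A₂)
    (hx : x ∈ steepSet B g A₁) (hr : r ∈ normalRange B g (2 * A₀ / A₁) x) :
    ‖gradient g (normalPoint g x r)‖ ≤ 2 * ‖gradient g x‖ := by
  have htri := norm_le_norm_add_norm_sub' (gradient g (normalPoint g x r)) (gradient g x)
  have hsteep : A₁ < ‖gradient g x‖ := hx.1
  linarith [h.norm_gradient_normalPoint_sub_le hx.2 hr, h.A₁_pos]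

theorem abs_inner_gradient_normalPoint_sub_le (h : IsSmallPerturbation B g p A₀ A₁ A₂)
    (hx : x ∈ steepSet B g A₁) (hy : y ∈ B) (hrx : r ∈ normalRange B g (2 * A₀ / A₁) x)
    (hry : r ∈ normalRange B g (2 * A₀ / A₁) y) :
    |inner ℝ (gradient g (normalPoint g x r)) (unitNormal g x) -
      inner ℝ (gradient g (normalPoint g y r)) (unitNormal g y)| ≤ 6 * A₂ * ‖x - y‖ := by
  have hpoint := h.norm_normalPoint_sub_normalPoint_le hx hy (abs_le_of_mem_normalRange hrx)
  calc |inner ℝ (gradient g (normalPoint g x r)) (unitNormal g x) -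
        inner ℝ (gradient g (normalPoint g y r)) (unitNormal g y)|
      ≤ ‖gradient g (normalPoint g x r)‖ * ‖unitNormal g x - unitNormal g y‖ +
        ‖gradient g (normalPoint g x r) - gradient g (normalPoint g y r)‖ * ‖unitNormal g y‖ :=
        abs_inner_sub_inner_le _ _ _ _
    _ ≤ 2 * ‖gradient g x‖ * ‖unitNormal g x - unitNormal g y‖ +
        A₂ * ‖normalPoint g x r - normalPoint g y r‖ * 1 := by
        have hA₂ := h.A₂_pos.le
        gcongr
        · exact h.norm_gradient_normalPoint_le hx hrx
        · exact h.norm_gradient_left_sub_le hrx.2 hry.2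
        · exact norm_unitNormal_le_one
    _ ≤ 6 * A₂ * ‖x - y‖ := by
        linarith [h.norm_gradient_mul_norm_unitNormal_sub_le hx.2 hy,
          mul_le_mul_of_nonneg_left hpoint h.A₂_pos.le]

theorem abs_normalPoint_increment_sub_le (h : IsSmallPerturbation B g p A₀ A₁ A₂)
    (hx : x ∈ steepSet B g A₁) (hy : y ∈ B) (hrx : r ∈ normalRange B g (2 * A₀ / A₁) x)
    (hry : r ∈ normalRange B g (2 * A₀ / A₁) y) :
    |(g (normalPoint g x r) - g (normalPoint g y r)) - (g x - g y)| ≤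
      6 * A₂ * ‖x - y‖ * |r| := by
  have hsegment {z : H} (hz : z ∈ B) (hrz : r ∈ normalRange B g (2 * A₀ / A₁) z) :
      uIcc 0 r ⊆ normalRange B g (2 * A₀ / A₁) z :=
    (convex_normalRange h.convex).ordConnected.uIcc_subset (h.zero_mem_normalRange hz) hrz
  have hder (z : H) (t : ℝ) : HasDerivAt (fun t => g (normalPoint g z t))
      (inner ℝ (gradient g (normalPoint g z t)) (unitNormal g z)) t :=
    hasDerivAt_comp_add_smul (h.differentiable_left _)
  have hmvt := (convex_uIcc (0 : ℝ) r).norm_image_sub_le_of_norm_hasDerivWithin_le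
    (fun t _ => ((hder x t).sub (hder y t)).hasDerivWithinAt)
    (fun t ht => h.abs_inner_gradient_normalPoint_sub_le hx hy (hsegment hx.2 hrx ht)
      (hsegment hy hry ht)) left_mem_uIcc right_mem_uIcc
  simpa only [Pi.sub_apply, normalPoint_zero, sub_zero, Real.norm_eq_abs] using hmvt

theorem abs_normalDefect_sub_le (h : IsSmallPerturbation B g p A₀ A₁ A₂)
    (hx : x ∈ steepSet B g A₁) (hy : y ∈ B) (hrx : r ∈ normalRange B g (2 * A₀ / A₁) x)
    (hry : r ∈ normalRange B g (2 * A₀ / A₁) y) :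
    |normalDefect g p x r - normalDefect g p y r| ≤ 14 * (A₀ * A₂ / A₁) * ‖x - y‖ := by
  have hr := abs_le_of_mem_normalRange hrx
  have hg := h.abs_normalPoint_increment_sub_le hx hy hrx hry
  have hp : |p (normalPoint g x r) - p (normalPoint g y r)| ≤ A₀ * (2 * ‖x - y‖) :=
    (h.abs_right_sub_le hrx.2 hry.2).trans
      (mul_le_mul_of_nonneg_left (h.norm_normalPoint_sub_normalPoint_le hx hy hr) h.A₀_nonneg)
  have hA₀ : A₀ ≤ A₀ * A₂ / A₁ := by
    rw [le_div_iff₀ h.A₁_pos]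
    exact mul_le_mul_of_nonneg_left h.A₁_le_A₂ h.A₀_nonneg
  calc |normalDefect g p x r - normalDefect g p y r|
      = |((g (normalPoint g x r) - g (normalPoint g y r)) - (g x - g y)) +
          (p (normalPoint g x r) - p (normalPoint g y r))| := by
        rw [normalDefect, normalDefect]; congr 1; ring
    _ ≤ 6 * A₂ * ‖x - y‖ * |r| + A₀ * (2 * ‖x - y‖) := (abs_add_le _ _).trans (add_le_add hg hp)
    _ ≤ 6 * A₂ * ‖x - y‖ * (2 * A₀ / A₁) + A₀ * A₂ / A₁ * (2 * ‖x - y‖) := by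
        have := h.A₂_pos.le
        gcongr
    _ = 14 * (A₀ * A₂ / A₁) * ‖x - y‖ := by ring

theorem abs_sub_le_of_mem_normalRoots (h : IsSmallPerturbation B g p A₀ A₁ A₂)
    (hx : x ∈ steepSet B g A₁) (hy : y ∈ steepSet B g A₁)
    (hr : r ∈ normalRoots B g p (2 * A₀ / A₁) x) (hs : s ∈ normalRoots B g p (2 * A₀ / A₁) y) :
    |r - s| ≤ 28 * (A₀ * A₂ / A₁ ^ 2) * ‖x - y‖ := by
  -- Both defects can be compared at the smaller height: unless `p x = 0`, which forces `r = 0`,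
  -- the whole normal segment at `x` lies in `B`.
  wlog hsr : |s| ≤ |r| generalizing x y r s
  · rw [abs_sub_comm, norm_sub_rev]
    exact this hy hx hs hr (le_of_not_ge hsr)
  by_cases hpx : p x = 0
  · have hr0 : r = 0 := h.eq_zero_of_mem_normalRoots hx hpx hr
    have hs0 : s = 0 := by simpa [hr0] using hsr
    rw [hr0, hs0, sub_self, abs_zero]
    exact mul_nonneg (mul_nonneg (by norm_num) h.A₀_mul_A₂_div_sq_nonneg) (norm_nonneg _)
  have hsx : s ∈ normalRange B g (2 * A₀ / A₁) x :=
    (h.normalRange_eq_Icc hx.2 hpx).symm ▸ hs.1.1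
  have hmono := h.mul_abs_sub_le_abs_normalDefect_sub hx hr.1 hsx
  have hbase := h.abs_normalDefect_sub_le hx hy.2 hsx hs.1
  rw [hr.2, zero_sub, abs_neg] at hmono
  rw [hs.2, sub_zero] at hbase
  have hA₁ := h.A₁_pos
  refine le_of_mul_le_mul_left ((hmono.trans hbase).trans_eq ?_) (half_pos hA₁)
  field_simp
  ring

theorem norm_smul_unitNormal_sub_le_of_mem_normalRoots (h : IsSmallPerturbation B g p A₀ A₁ A₂)
    (hx : x ∈ steepSet B g A₁) (hy : y ∈ steepSet B g A₁)
    (hr : r ∈ normalRoots B g p (2 * A₀ / A₁) x) (hs : s ∈ normalRoots B g p (2 * A₀ / A₁) y) :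
    ‖r • unitNormal g x - s • unitNormal g y‖ ≤ 32 * (A₀ * A₂ / A₁ ^ 2) * ‖x - y‖ := by
  have hheight := h.abs_sub_le_of_mem_normalRoots hx hy hr hs
  have hnormal := h.abs_mul_norm_unitNormal_sub_le hx hy.2 (abs_le_of_mem_normalRange hs.1)
  calc ‖r • unitNormal g x - s • unitNormal g y‖
      = ‖(r - s) • unitNormal g x + s • (unitNormal g x - unitNormal g y)‖ := by
        rw [sub_smul, smul_sub, sub_add_sub_cancel]
    _ ≤ |r - s| * ‖unitNormal g x‖ + |s| * ‖unitNormal g x - unitNormal g y‖ := by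
        rw [← Real.norm_eq_abs, ← Real.norm_eq_abs, ← norm_smul, ← norm_smul]
        exact norm_add_le _ _
    _ ≤ 28 * (A₀ * A₂ / A₁ ^ 2) * ‖x - y‖ * 1 + 4 * (A₀ * A₂ / A₁ ^ 2) * ‖x - y‖ :=
        add_le_add (mul_le_mul hheight norm_unitNormal_le_one (norm_nonneg _)
          ((abs_nonneg _).trans hheight)) hnormal
    _ = 32 * (A₀ * A₂ / A₁ ^ 2) * ‖x - y‖ := by ring

variable {ρ : H → ℝ}

theorem lipschitzOnWith_smul_unitNormal (h : IsSmallPerturbation B g p A₀ A₁ A₂)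
    (hρ : ∀ x ∈ steepSet B g A₁, ρ x ∈ normalRoots B g p (2 * A₀ / A₁) x) :
    LipschitzOnWith (32 * (A₀ * A₂ / A₁ ^ 2)).toNNReal (fun x => ρ x • unitNormal g x)
      (steepSet B g A₁) :=
  LipschitzOnWith.of_dist_le' fun x hx y hy => by
    rw [dist_eq_norm, dist_eq_norm]
    exact h.norm_smul_unitNormal_sub_le_of_mem_normalRoots hx hy (hρ x hx) (hρ y hy)

theorem contDiffOn_of_mem_normalRoots (h : IsSmallPerturbation B g p A₀ A₁ A₂)
    (hρ : ∀ x ∈ steepSet B g A₁, ρ x ∈ normalRoots B g p (2 * A₀ / A₁) x) :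
    ContDiffOn ℝ 1 ρ (steepSet B g A₁) := by
  have hlip : LipschitzOnWith (28 * (A₀ * A₂ / A₁ ^ 2)).toNNReal ρ (steepSet B g A₁) :=
    LipschitzOnWith.of_dist_le' fun x hx y hy => by
      rw [Real.dist_eq, dist_eq_norm]
      exact h.abs_sub_le_of_mem_normalRoots hx hy (hρ x hx) (hρ y hy)
  intro x hx
  have hdefect : ContDiffAt ℝ 1 (fun z : H × ℝ => normalDefect g p z.1 z.2) (x, ρ x) :=
    contDiffAt_normalDefect (h.contDiff_left.of_le one_add_one_eq_two.le) h.contDiff_right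
      (gradient_ne_zero_of_mem_steepSet h.A₁_pos.le hx)
  have hderiv_pos := (half_pos h.A₁_pos).trans_le
    (h.half_le_inner_gradient_unitNormal hx (hρ x hx).1)
  exact contDiffWithinAt_of_implicit hdefect one_ne_zero
    (isInvertible_fderiv_comp_inr (hdefect.differentiableAt one_ne_zero)
      (hasDerivAt_normalDefect h.differentiable_left h.differentiable_right) hderiv_pos.ne')
    (hlip.continuousOn x hx) fun y hy => (hρ y hy).2.trans (hρ x hx).2.symm

theorem contDiffOn_smul_unitNormal (h : IsSmallPerturbation B g p A₀ A₁ A₂)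
    (hρ : ∀ x ∈ steepSet B g A₁, ρ x ∈ normalRoots B g p (2 * A₀ / A₁) x) :
    ContDiffOn ℝ 1 (fun x => ρ x • unitNormal g x) (steepSet B g A₁) :=
  (h.contDiffOn_of_mem_normalRoots hρ).smul fun _ hx =>
    (contDiffAt_unitNormal (h.contDiff_left.of_le one_add_one_eq_two.le)
      (gradient_ne_zero_of_mem_steepSet h.A₁_pos.le hx)).contDiffWithinAt

end IsSmallPerturbation

theorem statement_8_general [MeasurableSpace H] [BorelSpace H] {ℓ : ℝ}
    (h : IsSmallPerturbation B g p A₀ A₁ A₂) (hℓ : ∀ x ∈ B, g x = ℓ → A₁ < ‖gradient g x‖) :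
    ∃ (V : Set H) (φ : H → H),
      (∃ U : Set H, IsOpen U ∧ V = U ∩ B) ∧
      {x | g x = ℓ} ∩ B ⊆ V ∧
      InjOn φ V ∧
      ContDiffOn ℝ 1 φ V ∧
      MapsTo φ V B ∧
      (∀ x ∈ V, ∃ r : ℝ, |r| ≤ 2 * A₀ / A₁ ∧
        φ x = x + r • (‖gradient g x‖⁻¹ • gradient g x) ∧
        g (φ x) + p (φ x) = g x) ∧
      ∀ s : ℝ, 0 ≤ s → ∀ E ⊆ B,
        |(μH[s] (φ '' ({x | g x = ℓ} ∩ E))).toReal - (μH[s] ({x | g x = ℓ} ∩ E)).toReal| ≤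
          32 * 2 ^ s * (A₀ * A₂ / A₁ ^ 2) * (μH[s] ({x | g x = ℓ} ∩ E)).toReal := by
  choose! ρ hρ using fun x (hx : x ∈ steepSet B g A₁) => h.nonempty_normalRoots hx
  have hlip := h.lipschitzOnWith_smul_unitNormal hρ
  have hK : (32 * (A₀ * A₂ / A₁ ^ 2)).toNNReal < 1 :=
    Real.toNNReal_lt_one.2 (by linarith [h.A₀_mul_A₂_div_sq_le])
  have hopen : IsOpen {x | A₁ < ‖gradient g x‖} := isOpen_lt continuous_const
    (contDiff_gradient (h.contDiff_left.of_le one_add_one_eq_two.le)).continuous.norm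
  refine ⟨steepSet B g A₁, fun x => x + ρ x • unitNormal g x, ⟨_, hopen, rfl⟩,
    fun x hx => ⟨hℓ x hx.2 hx.1, hx.2⟩, injOn_id_add hlip hK,
    contDiffOn_id.add (h.contDiffOn_smul_unitNormal hρ), fun x hx => (hρ x hx).1.2,
    fun x hx => ⟨ρ x, abs_le_of_mem_normalRange (hρ x hx).1, rfl,
      normalDefect_eq_zero_iff.1 (hρ x hx).2⟩, fun s hs E hE => ?_⟩
  have hsub : {x | g x = ℓ} ∩ E ⊆ steepSet B g A₁ := fun x hx => ⟨hℓ x (hE hx.2) hx.1, hE hx.2⟩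
  have hmeasure := abs_toReal_hausdorffMeasure_image_id_add_sub_le (hlip.mono hsub) hK hs
  rw [Real.coe_toNNReal _ (mul_nonneg (by norm_num) h.A₀_mul_A₂_div_sq_nonneg)] at hmeasure
  exact hmeasure.trans_eq (by ring)

end NormalLines

section UnitCube

variable {d : ℕ} {w : Fin d → ℤ}

theorem convex_unitCube : Convex ℝ (unitCube d w) :=
  fun _ hx _ hy _ _ ha hb hab i => convex_Icc _ _ (hx i) (hy i) ha hb hab

theorem isSmallPerturbation_unitCube {g p : Euc d → ℝ} {A₀ A₁ A₂ : ℝ} (hg : ContDiff ℝ 2 g)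
    (hp : ContDiff ℝ 1 p) (hA₁ : 0 < A₁) (hA₁₂ : A₁ ≤ A₂) (hA₀ : 0 ≤ A₀)
    (hsmall : A₀ ≤ A₁ ^ 2 / (64 * A₂))
    (hH : ∀ x ∈ unitCube d w, ‖fderiv ℝ (fderiv ℝ g) x‖ ≤ A₂)
    (hP : ∀ x ∈ unitCube d w, max |p x| ‖gradient p x‖ ≤ A₀)
    (hP0 : ∀ x ∈ unitCube d w, infDist x (frontier (unitCube d w)) ≤ 2 * A₀ / A₁ → p x = 0) :
    IsSmallPerturbation (unitCube d w) g p A₀ A₁ A₂ where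
  convex := convex_unitCube
  contDiff_left := hg
  contDiff_right := hp
  A₀_nonneg := hA₀
  A₁_pos := hA₁
  A₁_le_A₂ := hA₁₂
  small := by
    rw [le_div_iff₀ (mul_pos (by norm_num) (hA₁.trans_le hA₁₂))] at hsmall
    linarith
  norm_hessian_left_le := hH
  abs_right_le x hx := (le_max_left _ _).trans (hP x hx)
  norm_gradient_right_le x hx := (le_max_right _ _).trans (hP x hx)
  closedBall_subset x hx hpx :=
    closedBall_subset_of_lt_infDist_frontier hx (lt_of_not_ge (mt (hP0 x hx) hpx))

end UnitCube

/-- The normal projection `φ` of Statement 7 distorts the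
`(d−1)`-dimensional Hausdorff measure of pieces of the level set `{g = ℓ}` lying well
inside `B` by a factor of at most `1 ± C′_d·A₀A₂/A₁²`. -/
theorem statement_8 (d : ℕ) (hd : 1 ≤ d) :
    ∃ C C' : ℝ, 20 ≤ C ∧ 0 < C' ∧
      ∀ (w : Fin d → ℤ) (ℓ : ℝ) (g p : Euc d → ℝ),
        ContDiff ℝ 2 g → ContDiff ℝ 2 p →
        ∀ (A₀ A₁ A₂ : ℝ),
          0 < A₁ → A₁ < 1 → 1 ≤ A₂ → 0 < A₀ → A₀ < A₁ ^ 2 / (C * A₂) →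
          (∀ x ∈ unitCube d w, g x = ℓ → A₁ < ‖gradient g x‖) →
          (∀ x ∈ unitCube d w, ‖fderiv ℝ (fderiv ℝ g) x‖ < A₂) →
          (∀ x ∈ unitCube d w, max |p x| ‖gradient p x‖ < A₀) →
          (∀ x ∈ unitCube d w,
            Metric.infDist x (frontier (unitCube d w)) ≤ 2 * A₀ / A₁ → p x = 0) →
          ∃ (V : Set (Euc d)) (φ : Euc d → Euc d),
            (∃ U : Set (Euc d), IsOpen U ∧ V = U ∩ unitCube d w) ∧
            {x | g x = ℓ} ∩ unitCube d w ⊆ V ∧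
            Set.InjOn φ V ∧
            ContDiffOn ℝ 1 φ V ∧
            Set.MapsTo φ V (unitCube d w) ∧
            (∀ x ∈ V, ∃ r : ℝ, |r| ≤ 2 * A₀ / A₁ ∧
              φ x = x + r • (‖gradient g x‖⁻¹ • gradient g x) ∧
              g (φ x) + p (φ x) = g x) ∧
            ∀ E : Set (Euc d), IsOpen E → E ⊆ unitCube d w →
              Metric.diam E ≤ A₁ / (3 * A₂) →
              (∀ x ∈ E, 2 * A₀ / A₁ ≤ Metric.infDist x (frontier (unitCube d w))) →
              |(μH[(d:ℝ) - 1] (φ '' ({x | g x = ℓ} ∩ E))).toReal -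
                (μH[(d:ℝ) - 1] ({x | g x = ℓ} ∩ E)).toReal| ≤
                C' * (A₀ * A₂ / A₁ ^ 2) * (μH[(d:ℝ) - 1] ({x | g x = ℓ} ∩ E)).toReal := by
  have hd0 : (0 : ℝ) ≤ (d : ℝ) - 1 := sub_nonneg.2 (mod_cast hd)
  refine ⟨64, 32 * 2 ^ ((d : ℝ) - 1), by norm_num, by positivity, ?_⟩
  intro w ℓ g p hg hp A₀ A₁ A₂ hA₁ hA₁' hA₂ hA₀ hsmall hG hH hP hP0
  have h := isSmallPerturbation_unitCube hg (hp.of_le one_le_two) hA₁ (hA₁'.le.trans hA₂) hA₀.le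
    hsmall.le (fun x hx => (hH x hx).le) (fun x hx => (hP x hx).le) hP0
  obtain ⟨V, φ, hV, hlevel, hinj, hφ, hmaps, hroot, hmeasure⟩ := statement_8_general h hG
  exact ⟨V, φ, hV, hlevel, hinj, hφ, hmaps, hroot,
    fun E _ hE _ _ => hmeasure _ hd0 E hE⟩

end
end
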